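/- arXiv:1302.5394 — 2 statements merged into one kernel-verified Lean document; each statement's English description precedes it below -/
import Mathlib

section
/- Let k, r, s be positive integers with r ≥ s ≥ 2 and let p be a prime number. Assume that for every n ≥ rk one has χ(KG^r(n,k)_{s-stab}) = ⌈(n − r(k−1)) / (r − 1)⌉. Then for every n ≥ prk, χ(KG^{pr}(n,k)_{s-stab}) = ⌈(n − pr(k−1)) / (pr − 1)⌉. -/
open Finset

/-- A proper `t`-coloring of the Kneser hypergraph `KG^r(F)`: vertices are the members of `F`,
colors are taken in `{1,...,t}`, and no set of `r` pairwise disjoint members of `F`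
(an edge) is monochromatic. -/
def IsKneserColoring (n r t : ℕ) (F : Finset (Finset (Fin n)))
    (c : Finset (Fin n) → ℕ) : Prop :=
  (∀ A ∈ F, c A ∈ Finset.Icc 1 t) ∧
    ∀ E : Finset (Finset (Fin n)), E ⊆ F → E.card = r →
      ((E : Set (Finset (Fin n))).Pairwise fun A B => Disjoint A B) →
      ¬ ∃ i, ∀ A ∈ E, c A = i

/-- The chromatic number of the Kneser hypergraph `KG^r(F)`. -/
noncomputable def kneserChrom (n r : ℕ) (F : Finset (Finset (Fin n))) : ℕ :=
  sInf {t | ∃ c, IsKneserColoring n r t F c}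

/-- A subset `A` of `[n]` (identified with `Fin n`) is `s`-stable: any two distinct
elements `i, j ∈ A` satisfy `s ≤ |i - j| ≤ n - s`. -/
def Stable (n s : ℕ) (A : Finset (Fin n)) : Prop :=
  ∀ i ∈ A, ∀ j ∈ A, i ≠ j →
    s ≤ max i.val j.val - min i.val j.val ∧ max i.val j.val - min i.val j.val ≤ n - s

open Classical in
/-- The vertex set of the `s`-stable Kneser hypergraph `KG^r(n,k)_{s-stab}`:
all `s`-stable `k`-element subsets of `[n]`. -/
noncomputable def stableSets (n s k : ℕ) : Finset (Finset (Fin n)) :=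
  Finset.univ.filter fun A => A.card = k ∧ Stable n s A

namespace ZpT

section alg
variable {p : ℕ} [Fact p.Prime]

/-- cyclic shift on the group ring -/
def T : (ZMod p → ZMod p) →ₗ[ZMod p] (ZMod p → ZMod p) where
  toFun f b := f (b - 1)
  map_add' _ _ := rfl
  map_smul' _ _ := rfl

/-- norm element -/
def Nm : (ZMod p → ZMod p) →ₗ[ZMod p] (ZMod p → ZMod p) where
  toFun f _ := ∑ a, f a
  map_add' f g := by ext b; simp [Finset.sum_add_distrib]
  map_smul' c f := by ext b; simp [Finset.mul_sum]

def sO (x : ZMod p) : (ZMod p → ZMod p) →ₗ[ZMod p] (ZMod p → ZMod p) where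
  toFun f b := ∑ a, if (b - x).val < (a - x).val then f a else 0
  map_add' f g := by
    ext b; simp only [Pi.add_apply, ← Finset.sum_add_distrib]
    refine Finset.sum_congr rfl fun a _ => ?_
    split_ifs <;> simp
  map_smul' c f := by
    ext b; simp [Finset.mul_sum]

def sE (x : ZMod p) : (ZMod p → ZMod p) →ₗ[ZMod p] (ZMod p → ZMod p) where
  toFun f b := if b = x then f (x - 1) else 0
  map_add' f g := by ext b; simp only [Pi.add_apply]; split_ifs <;> simp
  map_smul' c f := by ext b; simp

lemma T_apply (f : ZMod p → ZMod p) (b) : T f b = f (b - 1) := rfl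
lemma Nm_apply (f : ZMod p → ZMod p) (b) : Nm f b = ∑ a, f a := rfl
lemma sO_apply (x) (f : ZMod p → ZMod p) (b) :
  sO x f b = ∑ a, if (b - x).val < (a - x).val then f a else 0 := rfl
lemma sE_apply (x) (f : ZMod p → ZMod p) (b) :
  sE x f b = if b = x then f (x - 1) else 0 := rfl

lemma sum_shift (f : ZMod p → ZMod p) : ∑ a, f (a - 1) = ∑ a, f a :=
  Equiv.sum_comp (Equiv.subRight (1 : ZMod p)) f

lemma val_neg_one' : ((-1 : ZMod p)).val = p - 1 := by
  have h := (Fact.out : p.Prime).two_le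
  obtain ⟨q, rfl⟩ : ∃ q, p = q + 1 := ⟨p - 1, by omega⟩
  exact ZMod.val_neg_one q

lemma val_succ (a : ZMod p) (h : a ≠ -1) : (a + 1).val = a.val + 1 := by
  have h2 := (Fact.out : p.Prime).two_le
  have : Fact (1 < p) := ⟨by omega⟩
  have h1 : (1 : ZMod p).val = 1 := ZMod.val_one p
  have hlt : a.val ≠ p - 1 := by
    intro hh
    apply h
    apply ZMod.val_injective p
    rw [hh, val_neg_one']
  have := ZMod.val_lt a
  rw [ZMod.val_add_of_lt, h1]
  omega

lemma indic (a b : ZMod p) :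
    ((if b.val < (a + 1).val then (1 : ZMod p) else 0) - (if b.val < a.val then 1 else 0))
      + (if a = -1 then 1 else 0) = if a = b then 1 else 0 := by
  by_cases h : a = -1
  · subst h
    have hb := ZMod.val_lt b
    have : (-1 : ZMod p) = b ↔ b.val = p - 1 := by
      rw [← val_neg_one', ← (ZMod.val_injective p).eq_iff, eq_comm]
    simp only [neg_add_cancel, ZMod.val_zero, not_lt_zero, if_false, val_neg_one', if_true, this]
    by_cases h' : b.val = p - 1
    · simp [h']
    · have : b.val < p - 1 := by omega
      simp [h', this]
  · rw [val_succ a h]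
    have : a = b ↔ b.val = a.val := by
      rw [← (ZMod.val_injective p).eq_iff, eq_comm]
    simp only [h, this, if_false]
    rcases lt_trichotomy b.val a.val with h' | h' | h'
    · have h1 : b.val < a.val + 1 := by omega
      have h2 : b.val ≠ a.val := by omega
      simp [h', h1, h2]
    · simp [h']
    · have h1 : ¬ b.val < a.val + 1 := by omega
      have h2 : b.val ≠ a.val := by omega
      have h3 : ¬ b.val < a.val := by omega
      simp [h1, h2, h3]

lemma hom1 (x : ZMod p) (f : ZMod p → ZMod p) :
    Nm (sE x f) + sO x (T f - f) = f := by
  ext b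
  have e1 : ∑ a, (if (b - x).val < (a - x).val then f (a - 1) else 0)
      = ∑ a, (if (b - x).val < (a + 1 - x).val then f a else 0) := by
    rw [← sum_shift (fun a => if (b - x).val < (a + 1 - x).val then f a else 0)]; simp
  simp only [Pi.add_apply, Nm_apply, sE_apply, sO_apply, Pi.sub_apply, T_apply]
  have e2 : ∑ a, (if (b - x).val < (a - x).val then f (a - 1) - f a else 0)
     = ∑ a, f a * ((if (b - x).val < (a + 1 - x).val then 1 else 0)
        - (if (b - x).val < (a - x).val then 1 else 0)) := by
    simp only [mul_sub, Finset.sum_sub_distrib, mul_ite, mul_one, mul_zero]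
    rw [← e1, ← Finset.sum_sub_distrib]
    refine Finset.sum_congr rfl fun a _ => ?_
    split_ifs <;> simp
  rw [e2]
  have e3 : ∑ a : ZMod p, (if a = x then f (x - 1) else 0)
      = ∑ a, f a * (if a - x = -1 then 1 else 0) := by
    have : ∀ a : ZMod p, (a - x = -1) ↔ a = x - 1 := by
      intro a; constructor <;> intro h
      · linear_combination h
      · rw [h]; ring
    simp [this]
  rw [e3, ← Finset.sum_add_distrib]
  have : ∀ a, f a * (if a - x = -1 then (1 : ZMod p) else 0) +
      f a * ((if (b - x).val < (a + 1 - x).val then 1 else 0)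
        - (if (b - x).val < (a - x).val then 1 else 0)) = f a * (if a = b then 1 else 0) := by
    intro a
    have := indic (a - x) (b - x)
    rw [show a - x + 1 = a + 1 - x by ring] at this
    simp only [sub_left_inj] at this
    rw [← this]; ring
  rw [Finset.sum_congr rfl fun a _ => this a]
  simp

lemma indic2 (a c : ZMod p) :
    ((if c.val < a.val then (1 : ZMod p) else 0) - (if (c + 1).val < a.val then 1 else 0))
      + (if c = -1 then 1 else 0) = if a = c + 1 then 1 else 0 := by
  by_cases h : c = -1
  · subst h
    have ha := ZMod.val_lt a
    have h1 : ¬ p - 1 < a.val := by omega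
    have : a = 0 ↔ a.val = 0 := (ZMod.val_eq_zero a).symm
    simp only [neg_add_cancel, ZMod.val_zero, if_false, val_neg_one', if_true, this, h1]
    by_cases h' : a.val = 0
    · simp [h']
    · have : 0 < a.val := by omega
      simp [h', this]
  · have : a = c + 1 ↔ a.val = c.val + 1 := by
      rw [← val_succ c h, ← (ZMod.val_injective p).eq_iff]
    rw [val_succ c h]
    simp only [h, this, if_false]
    rcases lt_trichotomy a.val (c.val + 1) with h' | h' | h'
    · have h1 : ¬ c.val < a.val := by omega
      have h2 : a.val ≠ c.val + 1 := by omega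
      have h3 : ¬ c.val + 1 < a.val := by omega
      simp [h1, h2, h3]
    · simp [h']
    · have h1 : c.val < a.val := by omega
      have h2 : a.val ≠ c.val + 1 := by omega
      simp [h1, h2, h']

lemma hom2 (x : ZMod p) (f : ZMod p → ZMod p) :
    (T (sO x f) - sO x f) + sE x (Nm f) = f := by
  ext b
  simp only [Pi.add_apply, Nm_apply, sE_apply, sO_apply, Pi.sub_apply, T_apply]
  have : ∀ a, (((if (b - 1 - x).val < (a - x).val then f a else 0)
      - (if (b - x).val < (a - x).val then f a else 0)) + (if b = x then f a else 0))
       = f a * (if a = b then 1 else 0) := by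
    intro a
    have := indic2 (a - x) (b - 1 - x)
    have hb : b - 1 - x = -1 ↔ b = x := by
      constructor <;> intro h
      · linear_combination h
      · rw [h]; ring
    rw [show b - 1 - x + 1 = b - x by ring] at this
    simp only [sub_left_inj, hb] at this
    rw [← this]
    split_ifs <;> ring
  have h2 := Finset.sum_congr (rfl : (univ : Finset (ZMod p)) = univ) fun a _ => this a
  rw [Finset.sum_add_distrib, Finset.sum_sub_distrib] at h2
  have h3 : (∑ a, if b = x then f a else 0) = if b = x then ∑ a, f a else 0 := by
    split_ifs <;> simp
  rw [h3] at h2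
  rw [h2]; simp

lemma sOE (x : ZMod p) (f : ZMod p → ZMod p) : sO x (sE x f) = 0 := by
  ext b
  simp only [sO_apply, sE_apply, Pi.zero_apply]
  refine Finset.sum_eq_zero fun a _ => ?_
  by_cases h : a = x
  · simp [h]
  · simp [h]

lemma sEO (x : ZMod p) (f : ZMod p → ZMod p) : sE x (sO x f) = 0 := by
  ext b
  simp only [sO_apply, sE_apply, Pi.zero_apply]
  have : ∀ a : ZMod p, ¬ (x - 1 - x).val < (a - x).val := by
    intro a
    rw [show x - 1 - x = -1 by ring, val_neg_one']
    have := ZMod.val_lt (a - x)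
    omega
  simp only [this, if_false, Finset.sum_const_zero, ite_self]

lemma sE_T (x : ZMod p) (f : ZMod p → ZMod p) : sE (x + 1) (T f) = T (sE x f) := by
  ext b
  simp [sE_apply, T_apply, sub_eq_iff_eq_add]

lemma sO_T (x : ZMod p) (f : ZMod p → ZMod p) : sO (x + 1) (T f) = T (sO x f) := by
  ext b
  simp only [sO_apply, T_apply]
  rw [← sum_shift (fun a => if (b - 1 - x).val < (a - x).val then f a else 0)]
  refine Finset.sum_congr rfl fun a _ => ?_
  rw [show b - (x + 1) = b - 1 - x by ring, show a - (x + 1) = a - 1 - x by ring]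

lemma eps_of_D (f : ZMod p → ZMod p) (h : T f = f) : ∑ a, f a = 0 := by
  have h1 : ∀ n : ℕ, f (n : ZMod p) = f 0 := by
    intro n
    induction n with
    | zero => simp
    | succ n ih =>
      rw [← ih, ← h, T_apply]
      simp [h]
  have : ∀ a, f a = f 0 := fun a => by
    have := h1 a.val
    rwa [ZMod.natCast_zmod_val] at this
  simp [this]

end alg

end ZpT

namespace ZpT

section chains
variable {F : Type*} [CommRing F] {P : Type*}

/-- chains: formal combinations of lists -/
abbrev Ch (F : Type*) [CommRing F] (P : Type*) := List P →₀ F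

noncomputable def sg (F : Type*) [CommRing F] {P : Type*} (l : List P) : Ch F P :=
  Finsupp.single l 1

noncomputable def ext (F : Type*) [CommRing F] {P M : Type*} [AddCommGroup M] [Module F M]
    (f : List P → M) : Ch F P →ₗ[F] M :=
  Finsupp.linearCombination F f

@[simp] lemma ext_sg {M : Type*} [AddCommGroup M] [Module F M]
    (f : List P → M) (l : List P) : ext F f (sg F l) = f l := by
  simp [ext, sg]

lemma hom_ext {M : Type*} [AddCommGroup M] [Module F M] {f g : Ch F P →ₗ[F] M}
    (h : ∀ l, f (sg F l) = g (sg F l)) : f = g := by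
  apply Finsupp.lhom_ext'
  intro l
  ext
  simpa [sg] using h l

/-- prepend `a` -/
noncomputable def cons (a : P) : Ch F P →ₗ[F] Ch F P := ext F fun l => sg F (a :: l)

noncomputable def mapc {Q : Type*} (u : P → Q) : Ch F P →ₗ[F] Ch F Q :=
  ext F fun l => sg F (l.map u)

noncomputable def bdl (F : Type*) [CommRing F] {P : Type*} : List P → Ch F P
  | [] => 0
  | a :: l => sg F l - cons a (bdl F l)

/-- boundary -/
noncomputable def bd : Ch F P →ₗ[F] Ch F P := ext F (bdl F)

lemma bd_cons (a : P) (c : Ch F P) : bd (cons a c) = c - cons a (bd c) := by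
  have : (bd ∘ₗ cons a : Ch F P →ₗ[F] Ch F P) = LinearMap.id - cons a ∘ₗ bd := by
    apply hom_ext; intro l
    simp [cons, bd, bdl]
  exact LinearMap.congr_fun this c

lemma bd_nil : bd (sg F ([] : List P)) = 0 := by simp [bd, bdl]

lemma mapc_cons {Q : Type*} (u : P → Q) (a : P) (c : Ch F P) :
    mapc u (cons a c) = cons (u a) (mapc u c) := by
  have : (mapc u ∘ₗ cons a : Ch F P →ₗ[F] Ch F Q) = cons (u a) ∘ₗ mapc u := by
    apply hom_ext; intro l
    simp [cons, mapc]
  exact LinearMap.congr_fun this c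

lemma sg_cons (a : P) (l : List P) : sg F (a :: l) = cons a (sg F l) := by
  simp [cons]

lemma mapc_sg {Q : Type*} (u : P → Q) (l : List P) :
    mapc u (sg F l) = sg F (l.map u) := by simp [mapc]

lemma bd_mapc {Q : Type*} (u : P → Q) (c : Ch F P) : bd (mapc u c) = mapc u (bd c) := by
  have : (bd ∘ₗ mapc u : Ch F P →ₗ[F] Ch F Q) = mapc u ∘ₗ bd := by
    apply hom_ext; intro l
    induction l with
    | nil => simp [mapc, bd, bdl]
    | cons a l ih =>
      simp only [LinearMap.comp_apply] at ih ⊢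
      rw [sg_cons, mapc_cons, bd_cons, bd_cons, ih, map_sub, mapc_cons]
  exact LinearMap.congr_fun this c

noncomputable def prl (F : Type*) [CommRing F] {P : Type*} (u : P → P) : List P → Ch F P
  | [] => 0
  | a :: l => sg F (a :: u a :: l.map u) - cons a (prl F u l)

noncomputable def pr (u : P → P) : Ch F P →ₗ[F] Ch F P := ext F (prl F u)

lemma pr_cons (u : P → P) (a : P) (c : Ch F P) :
    pr u (cons a c) = cons a (cons (u a) (mapc u c)) - cons a (pr u c) := by
  have : (pr u ∘ₗ cons a : Ch F P →ₗ[F] Ch F P)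
      = cons a ∘ₗ cons (u a) ∘ₗ mapc u - cons a ∘ₗ pr u := by
    apply hom_ext; intro l
    simp [cons, pr, prl, mapc]
  exact LinearMap.congr_fun this c

lemma bd_pr (u : P → P) (c : Ch F P) : bd (pr u c) = mapc u c - c - pr u (bd c) := by
  have : (bd ∘ₗ pr u : Ch F P →ₗ[F] Ch F P) = mapc u - LinearMap.id - pr u ∘ₗ bd := by
    apply hom_ext; intro l
    induction l with
    | nil => simp [mapc, bd, bdl, pr, prl]
    | cons a l ih =>
      simp only [LinearMap.comp_apply, LinearMap.sub_apply, LinearMap.id_apply] at ih ⊢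
      rw [sg_cons, pr_cons, map_sub, bd_cons, bd_cons, bd_cons, bd_cons, ih, bd_mapc, mapc_cons]
      simp only [map_sub, pr_cons]
      abel
  exact LinearMap.congr_fun this c

/-- contraction -/
noncomputable def con (e : P) (u : P → P) : Ch F P →ₗ[F] Ch F P := cons e ∘ₗ mapc u - pr u

lemma bd_con (e : P) (u : P → P) (c : Ch F P) : bd (con e u c) = c - con e u (bd c) := by
  simp only [con, LinearMap.sub_apply, LinearMap.comp_apply, map_sub, bd_cons, bd_pr, bd_mapc]
  abel

lemma mapc_iter (u : P → P) (i : ℕ) (c : Ch F P) : (mapc u)^[i] c = mapc (u^[i]) c := by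
  induction i generalizing c with
  | zero =>
    have : (mapc id : Ch F P →ₗ[F] Ch F P) = LinearMap.id := by
      apply hom_ext; intro l; simp [mapc]
    simp [this]
  | succ i ih =>
    rw [Function.iterate_succ_apply, ih]
    have : (mapc (u^[i]) ∘ₗ mapc u : Ch F P →ₗ[F] Ch F P) = mapc (u^[i + 1]) := by
      apply hom_ext; intro l; simp [mapc, Function.iterate_succ]
    exact LinearMap.congr_fun this c

end chains

section psi
variable {p : ℕ} [Fact p.Prime] {P : Type*}

abbrev RR (p : ℕ) := (ZMod p → ZMod p) × (ZMod p → ZMod p)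

def s2 (x : ZMod p) : RR p →ₗ[ZMod p] RR p where
  toFun f := (sO x f.2, sE x f.1)
  map_add' f g := by simp
  map_smul' c f := by simp

def d2 : RR p →ₗ[ZMod p] RR p where
  toFun f := (Nm f.2, T f.1 - f.1)
  map_add' f g := by simp; abel
  map_smul' c f := by simp [smul_sub]

def T2 : RR p →ₗ[ZMod p] RR p where
  toFun f := (T f.1, T f.2)
  map_add' f g := by simp
  map_smul' c f := by simp

lemma s2_hom (x : ZMod p) (f : RR p) : d2 (s2 x f) = f - s2 x (d2 f) := by
  rw [eq_sub_iff_add_eq]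
  exact Prod.ext (hom1 x f.1) (hom2 x f.2)

lemma s2_s2 (x : ZMod p) (f : RR p) : s2 x (s2 x f) = 0 :=
  Prod.ext (sOE x f.1) (sEO x f.2)

lemma s2_T2 (x : ZMod p) (f : RR p) : s2 (x + 1) (T2 f) = T2 (s2 x f) :=
  Prod.ext (sO_T x f.2) (sE_T x f.1)

def psi (σ : P → ZMod p) : List P → RR p
  | [] => (fun _ => 1, 0)
  | a :: l => s2 (σ a) (psi σ l)

lemma psi_chain (σ : P → ZMod p) (l : List P) (h : psi σ l ≠ 0) :
    l.IsChain (fun a b => σ a ≠ σ b) := by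
  induction l with
  | nil => simp
  | cons a l ih =>
    have hl : psi σ l ≠ 0 := by
      intro h0; apply h; simp [psi, h0]
    have := ih hl
    cases l with
    | nil => simp
    | cons b l =>
      refine List.IsChain.cons_cons ?_ this
      intro hab
      apply h
      simp only [psi]
      rw [hab, s2_s2]

noncomputable def Psi (σ : P → ZMod p) : Ch (ZMod p) P →ₗ[ZMod p] RR p := ext (ZMod p) (psi σ)

lemma Psi_cons (σ : P → ZMod p) (a : P) (c : Ch (ZMod p) P) :
    Psi σ (cons a c) = s2 (σ a) (Psi σ c) := by
  have : (Psi σ ∘ₗ cons a : Ch (ZMod p) P →ₗ[ZMod p] RR p) = s2 (σ a) ∘ₗ Psi σ := by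
    apply hom_ext; intro l
    simp [cons, Psi, psi]
  exact LinearMap.congr_fun this c

lemma Psi_bd (σ : P → ZMod p) (c : Ch (ZMod p) P) :
    Psi σ (bd c) = d2 (Psi σ c) := by
  have : (Psi σ ∘ₗ bd : Ch (ZMod p) P →ₗ[ZMod p] RR p) = d2 ∘ₗ Psi σ := by
    apply hom_ext; intro l
    induction l with
    | nil => 
      simp only [LinearMap.comp_apply, bd_nil, map_zero]
      simp only [Psi, ext_sg, psi]
      refine Prod.ext ?_ ?_
      · simp [d2]
      · ext b; simp [d2, T_apply]
    | cons a l ih =>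
      simp only [LinearMap.comp_apply] at ih ⊢
      rw [sg_cons, bd_cons, map_sub, Psi_cons, Psi_cons, s2_hom, ih]
  exact LinearMap.congr_fun this c

/-- span of lists satisfying a predicate -/
noncomputable def Sp (p : ℕ) (G : List P → Prop) : Submodule (ZMod p) (Ch (ZMod p) P) :=
  Submodule.span (ZMod p) (sg (ZMod p) '' {l | G l})

lemma Sp_map {Q : Type*} {G : List P → Prop} {G' : List Q → Prop}
    (f : Ch (ZMod p) P →ₗ[ZMod p] Ch (ZMod p) Q)
    (h : ∀ l, G l → f (sg _ l) ∈ Sp p G') {c} (hc : c ∈ Sp p G) : f c ∈ Sp p G' := by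
  have : Sp p G ≤ (Sp p G').comap f := by
    apply Submodule.span_le.2
    rintro _ ⟨l, hl, rfl⟩
    exact h l hl
  exact this hc

lemma sg_mem {G : List P → Prop} {l : List P} (h : G l) : sg _ l ∈ Sp p G :=
  Submodule.subset_span ⟨l, h, rfl⟩

lemma Sp_eq {M : Type*} [AddCommGroup M] [Module (ZMod p) M] {G : List P → Prop}
    (f g : Ch (ZMod p) P →ₗ[ZMod p] M) (h : ∀ l, G l → f (sg _ l) = g (sg _ l))
    {c} (hc : c ∈ Sp p G) : f c = g c := by
  have : Set.EqOn f g (Sp p G) := by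
    apply LinearMap.eqOn_span
    rintro _ ⟨l, hl, rfl⟩
    exact h l hl
  exact this hc

lemma Psi_T (σ : P → ZMod p) (g : P → P) (G : List P → Prop)
    (hG : ∀ l, G l → ∀ a ∈ l, σ (g a) = σ a + 1) {c : Ch (ZMod p) P} (hc : c ∈ Sp p G) :
    Psi σ (mapc g c) = T2 (Psi σ c) := by
  refine Sp_eq (Psi σ ∘ₗ mapc g) (T2 ∘ₗ Psi σ) (fun l hl => ?_) hc
  replace hl := hG l hl
  induction l with
  | nil =>
    simp only [LinearMap.comp_apply, mapc_sg, Psi, ext_sg, psi, List.map_nil]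
    refine Prod.ext ?_ ?_
    · ext b; simp [T2, T_apply]
    · ext b; simp [T2]
  | cons a l ih =>
    simp only [LinearMap.comp_apply] at ih ⊢
    rw [sg_cons, mapc_cons, Psi_cons, Psi_cons, ih (fun b hb => hl b (by simp [hb])),
      hl a (by simp), s2_T2]

/-- norm on chains -/
noncomputable def NN (p : ℕ) [Fact p.Prime] (g : P → P) : Ch (ZMod p) P →ₗ[ZMod p] Ch (ZMod p) P :=
  ∑ i ∈ range p, (mapc g) ^ i

noncomputable def DD (p : ℕ) [Fact p.Prime] (g : P → P) : Ch (ZMod p) P →ₗ[ZMod p] Ch (ZMod p) P :=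
  mapc g - 1

lemma mapc_pow_p (g : P → P) (hg : ∀ a, g^[p] a = a) :
    (mapc g : Ch (ZMod p) P →ₗ[ZMod p] Ch (ZMod p) P) ^ p = 1 := by
  ext1 c
  ext1
  rw [LinearMap.comp_apply, Module.End.pow_apply, mapc_iter, show g^[p] = id from funext hg,
   ← Function.iterate_zero g, ← mapc_iter]
  simp

lemma NN_DD (g : P → P) (hg : ∀ a, g^[p] a = a) : NN p g * DD p g = 0 := by
  have h := geom_sum_mul (mapc g : Module.End (ZMod p) (Ch (ZMod p) P)) p
  rw [mapc_pow_p g hg, sub_self] at h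
  exact h

lemma DD_NN (g : P → P) (hg : ∀ a, g^[p] a = a) : DD p g * NN p g = 0 := by
  have h := mul_geom_sum (mapc g : Module.End (ZMod p) (Ch (ZMod p) P)) p
  rw [mapc_pow_p g hg, sub_self] at h
  exact h

lemma bd_NN (g : P → P) (c : Ch (ZMod p) P) : bd (NN p g c) = NN p g (bd c) := by
  simp only [NN, LinearMap.sum_apply, map_sum, Module.End.pow_apply, mapc_iter, bd_mapc]

lemma bd_DD (g : P → P) (c : Ch (ZMod p) P) : bd (DD p g c) = DD p g (bd c) := by
  simp [DD, bd_mapc]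

lemma sum_T (f : ZMod p → ZMod p) : ∑ i ∈ range p, (T^[i] f) = Nm f := by
  have h : ∀ i : ℕ, ∀ b, (T^[i] f) b = f (b - i) := by
    intro i
    induction i with
    | zero => simp
    | succ i ih =>
      intro b
      rw [Function.iterate_succ_apply', T_apply, ih]
      congr 1; push_cast; ring
  ext b
  rw [Finset.sum_apply, Nm_apply]
  simp only [h]
  rw [← Equiv.sum_comp (Equiv.subLeft b) f]
  refine Finset.sum_nbij' (fun i => (i : ZMod p)) (fun a => a.val) ?_ ?_ ?_ ?_ ?_
  · simp
  · intro a _; simpa using ZMod.val_lt a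
  · intro i hi; simpa using ZMod.val_cast_of_lt (by simpa using hi)
  · intro a _; simp
  · intro i hi; simp

lemma T2_iter (i : ℕ) (f : RR p) : T2^[i] f = (T^[i] f.1, T^[i] f.2) := by
  induction i with
  | zero => simp
  | succ i ih =>
    rw [Function.iterate_succ_apply', ih, Function.iterate_succ_apply',
      Function.iterate_succ_apply']
    rfl

lemma Sp_iter (g : P → P) (G : List P → Prop) (hGg : ∀ l, G l → G (l.map g))
    {c : Ch (ZMod p) P} (hc : c ∈ Sp p G) (i : ℕ) : (mapc g)^[i] c ∈ Sp p G := by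
  induction i with
  | zero => simpa
  | succ i ih =>
    rw [Function.iterate_succ_apply']
    exact Sp_map (mapc g) (fun l hl => by rw [mapc_sg]; exact sg_mem (hGg l hl)) ih

lemma NN_mem (g : P → P) (G : List P → Prop) (hGg : ∀ l, G l → G (l.map g))
    {c : Ch (ZMod p) P} (hc : c ∈ Sp p G) : NN p g c ∈ Sp p G := by
  simp only [NN, LinearMap.sum_apply, Module.End.pow_apply]
  exact Submodule.sum_mem _ fun i _ => Sp_iter g G hGg hc i

lemma DD_mem (g : P → P) (G : List P → Prop) (hGg : ∀ l, G l → G (l.map g))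
    {c : Ch (ZMod p) P} (hc : c ∈ Sp p G) : DD p g c ∈ Sp p G := by
  simp only [DD, LinearMap.sub_apply]
  exact Submodule.sub_mem _ (Sp_iter g G hGg hc 1) hc

lemma Psi_NN (σ : P → ZMod p) (g : P → P) (G : List P → Prop)
    (hG : ∀ l, G l → ∀ a ∈ l, σ (g a) = σ a + 1) (hGg : ∀ l, G l → G (l.map g))
    {c : Ch (ZMod p) P} (hc : c ∈ Sp p G) :
    Psi σ (NN p g c) = (Nm (Psi σ c).1, Nm (Psi σ c).2) := by
  simp only [NN, LinearMap.sum_apply, Module.End.pow_apply, map_sum]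
  have : ∀ i : ℕ, Psi σ ((mapc g)^[i] c) = T2^[i] (Psi σ c) := by
    intro i
    induction i with
    | zero => simp
    | succ i ih =>
      rw [Function.iterate_succ_apply', Function.iterate_succ_apply',
        Psi_T σ g G hG (Sp_iter g G hGg hc i), ih]
  simp only [this, T2_iter]
  rw [← sum_T, ← sum_T]
  refine Prod.ext ?_ ?_
  · simp [Prod.fst_sum]
  · simp [Prod.snd_sum]

lemma Psi_DD (σ : P → ZMod p) (g : P → P) (G : List P → Prop)
    (hG : ∀ l, G l → ∀ a ∈ l, σ (g a) = σ a + 1)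
    {c : Ch (ZMod p) P} (hc : c ∈ Sp p G) :
    Psi σ (DD p g c) = (T (Psi σ c).1 - (Psi σ c).1, T (Psi σ c).2 - (Psi σ c).2) := by
  simp only [DD, LinearMap.sub_apply, map_sub, Psi_T σ g G hG hc]
  rfl

lemma exists_of_Psi (σ : P → ZMod p) (G : List P → Prop)
    {c : Ch (ZMod p) P} (hc : c ∈ Sp p G) (h : Psi σ c ≠ 0) :
    ∃ l, G l ∧ l.IsChain (fun a b => σ a ≠ σ b) := by
  by_contra hcon
  push Not at hcon
  apply h
  have := Sp_eq (Psi σ) 0 (fun l hl => ?_) hc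
  · simpa using this
  · by_contra h0
    exact hcon l hl (psi_chain σ l (by simpa [Psi] using h0))

/-- The abstract chain argument.  `G L` is a family of list predicates. -/
theorem exists_chain (σ : P → ZMod p) (g : P → P) (hg : ∀ a, g^[p] a = a)
    (G : ℕ → List P → Prop) (e : ℕ → P) (u : ℕ → P → P) (n : ℕ)
    (hσ : ∀ L ≤ n, ∀ l, G L l → ∀ a ∈ l, σ (g a) = σ a + 1)
    (hGg : ∀ L ≤ n, ∀ l, G L l → G L (l.map g))
    (h1 : G 1 [e 0])
    (hcon : ∀ L, 1 ≤ L → L < n → ∀ l, G L l → con (e L) (u L) (sg (ZMod p) l) ∈ Sp p (G (L + 1)))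
    (hn : 1 ≤ n) :
    ∃ l, G n l ∧ l.IsChain (fun a b => σ a ≠ σ b) := by
  have key : ∀ L, 1 ≤ L → L ≤ n → ∃ z ∈ Sp p (G L),
      (if Even L then NN p g (bd z) = 0 ∧ ∑ a, (Psi σ z).1 a = 1
        else DD p g (bd z) = 0 ∧ ∑ a, (Psi σ z).2 a = 1) := by
    intro L hL
    induction L, hL using Nat.le_induction with
    | base =>
      intro _
      refine ⟨sg _ [e 0], sg_mem h1, ?_⟩
      rw [if_neg (by decide)]
      constructor
      · rw [sg_cons, bd_cons, bd_nil]
        simp [DD, mapc_sg]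
      · simp [Psi, psi, s2, sE_apply]
    | succ L hL ih =>
      intro hLn
      obtain ⟨z, hz, hz2⟩ := ih (by omega)
      by_cases hev : Even L
      · rw [if_pos hev] at hz2
        have hbd : bd (con (e L) (u L) (NN p g z)) = NN p g z := by
          rw [bd_con, bd_NN, hz2.1]; simp
        refine ⟨con (e L) (u L) (NN p g z), ?_, ?_⟩
        · exact Sp_map _ (hcon L hL (by omega)) (NN_mem g _ (hGg L (by omega)) hz)
        · rw [if_neg (by simpa [Nat.even_add_one] using hev)]
          refine ⟨?_, ?_⟩
          · rw [hbd]; exact LinearMap.congr_fun (DD_NN g hg) z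
          · have h := Psi_bd σ (con (e L) (u L) (NN p g z))
            rw [hbd, Psi_NN σ g _ (hσ L (by omega)) (hGg L (by omega)) hz] at h
            have h := congrFun (congrArg Prod.fst h) 0
            simp only [d2, LinearMap.coe_mk, AddHom.coe_mk, Nm_apply] at h
            rw [← h, hz2.2]
      · rw [if_neg hev] at hz2
        have hbd : bd (con (e L) (u L) (DD p g z)) = DD p g z := by
          rw [bd_con, bd_DD, hz2.1]; simp
        refine ⟨con (e L) (u L) (DD p g z), ?_, ?_⟩
        · exact Sp_map _ (hcon L hL (by omega)) (DD_mem g _ (hGg L (by omega)) hz)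
        · rw [if_pos (by simpa [Nat.even_add_one] using hev)]
          refine ⟨?_, ?_⟩
          · rw [hbd]; exact LinearMap.congr_fun (NN_DD g hg) z
          · have h := Psi_bd σ (con (e L) (u L) (DD p g z))
            rw [hbd, Psi_DD σ g _ (hσ L (by omega)) hz] at h
            have h := congrArg Prod.snd h
            simp only [d2, LinearMap.coe_mk, AddHom.coe_mk] at h
            have h' := eps_of_D ((Psi σ (con (e L) (u L) (DD p g z))).1 - (Psi σ z).2)
              (by rw [map_sub, ← sub_eq_zero]
                  rw [← sub_eq_zero] at h
                  rw [← neg_eq_zero, ← h]; abel)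
            simp only [Pi.sub_apply, Finset.sum_sub_distrib, hz2.2] at h'
            linear_combination h'
  obtain ⟨z, hz, hz2⟩ := key n hn le_rfl
  refine exists_of_Psi σ (G n) hz ?_
  intro h0
  rw [h0] at hz2
  split_ifs at hz2 <;> simp at hz2

end psi
end ZpT

namespace ZpT

section sets
variable {p : ℕ} [Fact p.Prime]

abbrev PP (p : ℕ) := Finset (ℕ × ZMod p)

/-- cyclic shift of a signed set -/
def sh (X : PP p) : PP p := X.image (fun y => (y.1, y.2 + 1))

lemma mem_sh (X : PP p) (a : ℕ) (x : ZMod p) : (a, x) ∈ sh X ↔ (a, x - 1) ∈ X := by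
  simp only [sh, mem_image, Prod.mk.injEq, Prod.exists]
  constructor
  · rintro ⟨a', x', h, rfl, rfl⟩
    simpa using h
  · intro h
    exact ⟨a, x - 1, h, rfl, by ring⟩

lemma mem_sh_iter (i : ℕ) (X : PP p) (a : ℕ) (x : ZMod p) :
    (a, x) ∈ sh^[i] X ↔ (a, x - i) ∈ X := by
  induction i generalizing x with
  | zero => simp
  | succ i ih =>
    rw [Function.iterate_succ_apply', mem_sh, ih]
    push_cast
    rw [show x - 1 - (i : ZMod p) = x - (i + 1) by ring]

lemma sh_p (X : PP p) : sh^[p] X = X := by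
  ext ⟨a, x⟩
  rw [mem_sh_iter]; simp

lemma sh_ssubset {X Y : PP p} (h : X ⊂ Y) : sh X ⊂ sh Y := by
  rw [Finset.ssubset_iff_subset_ne] at h ⊢
  refine ⟨Finset.image_subset_image h.1, ?_⟩
  intro he
  apply h.2
  ext ⟨a, x⟩
  have := congrArg (fun Z => (a, x + 1) ∈ Z) he
  simpa [mem_sh] using this

def Valid (L : ℕ) (A : PP p) : Prop :=
  A.Nonempty ∧ (∀ y ∈ A, y.1 < L) ∧ ∀ a x x', (a, x) ∈ A → (a, x') ∈ A → x = x'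

lemma Valid.sh {L : ℕ} {A : PP p} (h : Valid L A) : Valid L (sh A) := by
  obtain ⟨⟨y, hy⟩, h1, h2⟩ := h
  refine ⟨⟨(y.1, y.2 + 1), by rw [mem_sh]; simpa using hy⟩, ?_, ?_⟩
  · rintro ⟨a, x⟩ h
    rw [mem_sh] at h
    exact h1 (a, x - 1) h
  · intro a x x' h h'
    rw [mem_sh] at h h'
    have := h2 _ _ _ h h'
    linear_combination this

lemma Valid.mono {L : ℕ} {A : PP p} (h : Valid L A) : Valid (L + 1) A :=
  ⟨h.1, fun y hy => (h.2.1 y hy).trans (Nat.lt_succ_self L), h.2.2⟩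

lemma Valid.notMem {L : ℕ} {A : PP p} (h : Valid L A) : (L, (0 : ZMod p)) ∉ A :=
  fun h' => lt_irrefl _ (h.2.1 _ h')

lemma Valid.ins {L : ℕ} {A : PP p} (h : Valid L A) : Valid (L + 1) (insert (L, 0) A) := by
  obtain ⟨_, h1, h2⟩ := h
  refine ⟨⟨(L, 0), by simp⟩, ?_, ?_⟩
  · intro y hy
    rcases Finset.mem_insert.1 hy with rfl | hy
    · simp
    · have := h1 y hy; omega
  · intro a x x' h h'
    rcases Finset.mem_insert.1 h with h | h <;> rcases Finset.mem_insert.1 h' with h' | h'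
    · simp_all
    · have := h1 _ h'; simp_all
    · have := h1 _ h; simp_all
    · exact h2 _ _ _ h h'

def Good (L : ℕ) (l : List (PP p)) : Prop :=
  l.length = L ∧ l.Pairwise (· ⊂ ·) ∧ ∀ A ∈ l, Valid L A

def uu (L : ℕ) (A : PP p) : PP p := insert (L, 0) A

lemma ss_uu {L : ℕ} {A : PP p} (h : Valid L A) : A ⊂ uu L A := Finset.ssubset_insert h.notMem

lemma uu_ss {L : ℕ} {A B : PP p} (hB : Valid L B) (h : A ⊂ B) : uu L A ⊂ uu L B := by
  rw [Finset.ssubset_iff_subset_ne]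
  refine ⟨Finset.insert_subset_insert _ h.1, ?_⟩
  intro he
  obtain ⟨x, hx, hx'⟩ := Finset.exists_of_ssubset h
  have : x ∈ uu L A := by rw [he]; exact Finset.mem_insert_of_mem hx
  rcases Finset.mem_insert.1 this with rfl | h'
  · exact hB.notMem hx
  · exact hx' h'

lemma map_uu_pairwise {L : ℕ} {l : List (PP p)} (h : l.Pairwise (· ⊂ ·))
    (hv : ∀ A ∈ l, Valid L A) : (l.map (uu L)).Pairwise (· ⊂ ·) := by
  rw [List.pairwise_map]
  exact h.imp_of_mem (fun {a b} _ hb hab => uu_ss (hv b hb) hab)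

lemma map_uu_valid {L : ℕ} {l : List (PP p)}
    (hv : ∀ A ∈ l, Valid L A) : ∀ A ∈ l.map (uu L), Valid (L + 1) A := by
  intro A hA
  obtain ⟨B, hB, rfl⟩ := List.mem_map.1 hA
  exact (hv B hB).ins

lemma prl_mem (L : ℕ) (l : List (PP p)) (h : l.Pairwise (· ⊂ ·)) (hv : ∀ A ∈ l, Valid L A) :
    prl (ZMod p) (uu L) l ∈ Sp p (fun l' : List (PP p) => l'.length = l.length + 1 ∧
      l'.Pairwise (· ⊂ ·) ∧ (∀ A ∈ l', Valid (L + 1) A) ∧ ∀ B ∈ l', ∃ A ∈ l, A ⊆ B) := by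
  induction l with
  | nil => simp [prl]
  | cons a l ih =>
    rw [List.pairwise_cons] at h
    have hva : Valid L a := hv a (by simp)
    have hvl : ∀ A ∈ l, Valid L A := fun A hA => hv A (by simp [hA])
    rw [prl]
    refine Submodule.sub_mem _ (sg_mem ⟨by simp, ?_, ?_, ?_⟩) ?_
    · have h3 := map_uu_pairwise (l := a :: l) (List.pairwise_cons.2 h) hv
      refine List.pairwise_cons.2 ⟨?_, h3⟩
      intro B hB
      rw [← List.map_cons] at hB
      obtain ⟨A, hA, rfl⟩ := List.mem_map.1 hB
      rcases List.mem_cons.1 hA with rfl | hA'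
      · exact ss_uu hva
      · exact (h.1 A hA').trans (ss_uu (hvl A hA'))
    · intro A hA
      rcases List.mem_cons.1 hA with rfl | hA'
      · exact hva.mono
      · exact map_uu_valid hv A hA'
    · intro B hB
      rcases List.mem_cons.1 hB with rfl | hB
      · exact ⟨B, by simp, le_rfl⟩
      · rw [← List.map_cons] at hB
        obtain ⟨A, hA, rfl⟩ := List.mem_map.1 hB
        exact ⟨A, hA, Finset.subset_insert _ _⟩
    · refine Sp_map (cons a) (fun l' hl' => ?_) (ih h.2 hvl)
      obtain ⟨h1, h2, h3, h4⟩ := hl'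
      rw [← sg_cons]
      refine sg_mem ⟨by simp [h1], List.pairwise_cons.2 ⟨?_, h2⟩, ?_, ?_⟩
      · intro B hB
        obtain ⟨A, hA, hAB⟩ := h4 B hB
        exact (h.1 A hA).trans_subset hAB
      · intro A hA
        rcases List.mem_cons.1 hA with rfl | hA'
        · exact hva.mono
        · exact h3 A hA'
      · intro B hB
        rcases List.mem_cons.1 hB with rfl | hB
        · exact ⟨B, by simp, le_rfl⟩
        · obtain ⟨A, hA, hAB⟩ := h4 B hB
          exact ⟨A, by simp [hA], hAB⟩

lemma con_mem (L : ℕ) (l : List (PP p)) (h : Good L l) :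
    con {(L, (0 : ZMod p))} (uu L) (sg (ZMod p) l) ∈ Sp p (Good (p := p) (L + 1)) := by
  obtain ⟨h1, h2, h3⟩ := h
  simp only [con, LinearMap.sub_apply, LinearMap.comp_apply, mapc_sg, ← sg_cons]
  refine Submodule.sub_mem _ (sg_mem ⟨by simp [h1], ?_, ?_⟩) ?_
  · refine List.pairwise_cons.2 ⟨?_, map_uu_pairwise h2 h3⟩
    intro B hB
    obtain ⟨A, hA, rfl⟩ := List.mem_map.1 hB
    obtain ⟨y, hy⟩ := (h3 A hA).1
    rw [Finset.ssubset_iff_subset_ne]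
    refine ⟨by simp [uu], fun he => ?_⟩
    have hy' : y ∈ uu L A := Finset.mem_insert_of_mem hy
    rw [← he, Finset.mem_singleton] at hy'
    subst hy'
    exact (h3 A hA).notMem hy
  · intro A hA
    rcases List.mem_cons.1 hA with rfl | hA'
    · refine ⟨by simp, by simp, ?_⟩
      intro a x x' h h'
      simp_all
    · exact map_uu_valid h3 A hA'
  · have := prl_mem L l h2 h3
    simp only [pr, ext_sg]
    refine Sp_map LinearMap.id (fun l' hl' => ?_) this
    exact sg_mem ⟨by rw [hl'.1, h1], hl'.2.1, hl'.2.2.1⟩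

theorem exists_chain_sets (σ : PP p → ZMod p) (n : ℕ) (hn : 1 ≤ n)
    (hσ : ∀ A, Valid n A → σ (sh A) = σ A + 1) :
    ∃ l : List (PP p), Good n l ∧ l.IsChain (fun a b => σ a ≠ σ b) := by
  have hmono : ∀ L ≤ n, ∀ A : PP p, Valid L A → Valid n A := fun L hL A h =>
    ⟨h.1, fun y hy => (h.2.1 y hy).trans_le hL, h.2.2⟩
  refine exists_chain σ sh sh_p Good (fun L => {(L, 0)}) uu n ?_ ?_ ?_ ?_ hn
  · intro L hL l hl a ha
    exact hσ a (hmono L hL a (hl.2.2 a ha))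
  · intro L hL l hl
    refine ⟨by simp [hl.1], ?_, ?_⟩
    · rw [List.pairwise_map]
      exact hl.2.1.imp sh_ssubset
    · intro A hA
      obtain ⟨B, hB, rfl⟩ := List.mem_map.1 hA
      exact (hl.2.2 B hB).sh
  · refine ⟨rfl, by simp, ?_⟩
    intro A hA
    rw [List.mem_singleton] at hA
    subst hA
    refine ⟨by simp, by simp, ?_⟩
    intro a x x' h h'
    simp_all
  · intro L _ _ l hl
    exact con_mem L l hl

end sets

section sel
variable {p : ℕ} [Fact p.Prime]

def fib (X : PP p) (a : ℕ) : Finset (ZMod p) := univ.filter fun x => (a, x) ∈ X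

lemma fib_sh (X : PP p) (a : ℕ) : fib (sh X) a = (fib X a).image (· + 1) := by
  ext x
  simp only [fib, mem_filter, mem_univ, true_and, mem_sh, mem_image]
  constructor
  · intro h; exact ⟨_, h, by ring⟩
  · rintro ⟨y, hy, rfl⟩; simpa using hy

lemma card_fib_sh (X : PP p) (a : ℕ) : (fib (sh X) a).card = (fib X a).card := by
  rw [fib_sh, Finset.card_image_of_injective _ (add_left_injective 1)]

noncomputable def selIdx (X : PP p) : ℕ :=
  Classical.epsilon fun a => 0 < (fib X a).card ∧ (fib X a).card < p

noncomputable def sel (X : PP p) : ZMod p :=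
  ((fib X (selIdx X)).card : ZMod p)⁻¹ * ∑ x ∈ fib X (selIdx X), x

lemma sel_sh (X : PP p) (h : ∃ a, 0 < (fib X a).card ∧ (fib X a).card < p) :
    sel (sh X) = sel X + 1 := by
  have h1 : selIdx (sh X) = selIdx X := by
    simp only [selIdx, card_fib_sh]
  have h2 : 0 < (fib X (selIdx X)).card ∧ (fib X (selIdx X)).card < p :=
    Classical.epsilon_spec h
  have h3 : ((fib X (selIdx X)).card : ZMod p) ≠ 0 := by
    intro h0
    rw [ZMod.natCast_eq_zero_iff] at h0
    exact absurd (Nat.le_of_dvd h2.1 h0) (by omega)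
  simp only [sel, h1, card_fib_sh]
  rw [fib_sh, Finset.sum_image (fun x _ y _ h => add_left_injective 1 h),
    Finset.sum_add_distrib, mul_add]
  simp [h3]

end sel
end ZpT

namespace ZpT

section afl
variable {p : ℕ} [Fact p.Prime]

def col (A : PP p) (x : ZMod p) : Finset ℕ := (A.filter fun y => y.2 = x).image Prod.fst

lemma mem_col (A : PP p) (x : ZMod p) (a : ℕ) : a ∈ col A x ↔ (a, x) ∈ A := by
  simp [col]

lemma card_col (A : PP p) : A.card = ∑ x, (col A x).card := by
  rw [Finset.card_eq_sum_card_fiberwise (f := Prod.snd) (t := univ) (by simp)]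
  refine Finset.sum_congr rfl fun x _ => ?_
  rw [col, Finset.card_image_of_injOn]
  rintro ⟨a, y⟩ h ⟨b, z⟩ h' hab
  simp at h h' hab ⊢
  simp_all

lemma card_fib (B : PP p) (t : ℕ) (hB : ∀ y ∈ B, y.1 < t) :
    B.card = ∑ j ∈ range t, (fib B j).card := by
  rw [Finset.card_eq_sum_card_fiberwise (f := Prod.fst) (t := range t)
    (fun y hy => by simpa using hB y hy)]
  refine Finset.sum_congr rfl fun j _ => ?_
  have : fib B j = (B.filter fun y => y.1 = j).image Prod.snd := by
    ext x; simp [fib]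
  rw [this, Finset.card_image_of_injOn]
  rintro ⟨a, y⟩ h ⟨b, z⟩ h' hab
  simp at h h' hab ⊢
  simp_all

lemma col_sh (A : PP p) (x : ZMod p) : col (sh A) x = col A (x - 1) := by
  ext a; rw [mem_col, mem_col, mem_sh]

open Classical in
noncomputable def BB (K t : ℕ) (c : Finset ℕ → ℕ) (A : PP p) : PP p :=
  (range t ×ˢ univ).filter fun y => ∃ S ⊆ col A y.2, S.card = K ∧ c S = y.1

lemma mem_BB (K t : ℕ) (c : Finset ℕ → ℕ) (A : PP p) (j : ℕ) (x : ZMod p) :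
    (j, x) ∈ BB K t c A ↔ j < t ∧ ∃ S ⊆ col A x, S.card = K ∧ c S = j := by
  simp [BB]

lemma BB_sh (K t : ℕ) (c : Finset ℕ → ℕ) (A : PP p) : BB K t c (sh A) = sh (BB K t c A) := by
  ext ⟨j, x⟩
  rw [mem_sh, mem_BB, mem_BB, col_sh]

lemma BB_mono (K t : ℕ) (c : Finset ℕ → ℕ) {A A' : PP p} (h : A ⊆ A') :
    BB K t c A ⊆ BB K t c A' := by
  rintro ⟨j, x⟩ hj
  rw [mem_BB] at hj ⊢
  obtain ⟨h1, S, h2, h3⟩ := hj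
  refine ⟨h1, S, h2.trans ?_, h3⟩
  intro a ha
  rw [mem_col] at ha ⊢
  exact h ha

lemma sh_empty_iff (X : PP p) : sh X = ∅ ↔ X = ∅ := by simp [sh]

/-- The Alon-Frankl-Lovasz theorem for a prime number of parts. -/
theorem afl (n K t : ℕ) (hK : 1 ≤ K) (c : Finset ℕ → ℕ)
    (hc : ∀ S ⊆ range n, S.card = K → c S < t)
    (hn : p * (K - 1) + t * (p - 1) < n) :
    ∃ f : ZMod p → Finset ℕ, (∀ x, f x ⊆ range n ∧ (f x).card = K) ∧
      (∀ x y, x ≠ y → Disjoint (f x) (f y)) ∧ ∃ j, ∀ x, c (f x) = j := by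
  by_contra hcon
  have hp2 := (Fact.out : p.Prime).two_le
  have hcol : ∀ A : PP p, Valid n A → ∀ x, col A x ⊆ range n := by
    intro A hA x a ha
    rw [mem_col] at ha
    simpa using hA.2.1 _ ha
  -- fibres of B are proper
  have hfib : ∀ A : PP p, Valid n A → ∀ j, (fib (BB K t c A) j).card < p := by
    intro A hA j
    by_contra hlt
    have huniv : fib (BB K t c A) j = univ := by
      rw [← Finset.card_eq_iff_eq_univ, ZMod.card]
      refine le_antisymm ?_ (by omega)
      simpa [ZMod.card] using Finset.card_le_univ (fib (BB K t c A) j)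
    have hall : ∀ x, ∃ S ⊆ col A x, S.card = K ∧ c S = j := by
      intro x
      have : x ∈ fib (BB K t c A) j := by rw [huniv]; simp
      simp only [fib, mem_filter, mem_univ, true_and, mem_BB] at this
      exact this.2
    choose f hf1 hf2 hf3 using hall
    apply hcon
    refine ⟨f, fun x => ⟨(hf1 x).trans (hcol A hA x), hf2 x⟩, ?_, j, hf3⟩
    intro x y hxy
    rw [Finset.disjoint_left]
    intro a ha ha'
    have h1 := hf1 x ha
    have h2 := hf1 y ha'
    rw [mem_col] at h1 h2
    exact hxy (hA.2.2 _ _ _ h1 h2)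
  have hBt : ∀ A : PP p, ∀ y ∈ BB K t c A, y.1 < t := by
    rintro A ⟨j, x⟩ h
    exact ((mem_BB K t c A j x).1 h).1
  have hBcard : ∀ A : PP p, Valid n A → (BB K t c A).card ≤ t * (p - 1) := by
    intro A hA
    rw [card_fib _ t (hBt A)]
    refine (Finset.sum_le_card_nsmul _ _ (p - 1) fun j _ => ?_).trans (by simp)
    have := hfib A hA j
    omega
  have hAcard : ∀ A : PP p, Valid n A → BB K t c A = ∅ → A.card ≤ p * (K - 1) := by
    intro A hA hB
    rw [card_col]
    refine (Finset.sum_le_card_nsmul _ _ (K - 1) fun x _ => ?_).trans (by simp [ZMod.card])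
    by_contra hlt
    obtain ⟨S, hS, hS2⟩ := Finset.exists_subset_card_eq (show K ≤ (col A x).card by omega)
    have : (c S, x) ∈ BB K t c A := by
      rw [mem_BB]
      exact ⟨hc S (hS.trans (hcol A hA x)) hS2, S, hS, hS2, rfl⟩
    rw [hB] at this
    simp at this
  set σ : PP p → ZMod p := fun A =>
    if BB K t c A = ∅ then sel A else sel (BB K t c A) with hσdef
  set ρ : PP p → ℕ := fun A =>
    if BB K t c A = ∅ then A.card else p * (K - 1) + (BB K t c A).card with hρdef
  have hσ : ∀ A, Valid n A → σ (sh A) = σ A + 1 := by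
    intro A hA
    simp only [hσdef, BB_sh, sh_empty_iff]
    split_ifs with hB
    · apply sel_sh
      obtain ⟨⟨a, x⟩, hy⟩ := hA.1
      have : fib A a = {x} := by
        ext x'
        simp only [fib, mem_filter, mem_univ, true_and, mem_singleton]
        constructor
        · intro h; exact hA.2.2 _ _ _ h hy
        · rintro rfl; exact hy
      refine ⟨a, ?_⟩
      rw [this, card_singleton]
      omega
    · apply sel_sh
      obtain ⟨⟨j, x⟩, hy⟩ := Finset.nonempty_iff_ne_empty.2 hB
      refine ⟨j, Finset.card_pos.2 ⟨x, by simpa [fib] using hy⟩, hfib A hA j⟩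
  obtain ⟨l, ⟨hl1, hl2, hl3⟩, hl4⟩ := exists_chain_sets σ n (by omega) hσ
  have hstrict : ∀ A A' : PP p, Valid n A → Valid n A' → A ⊂ A' → σ A ≠ σ A' → ρ A < ρ A' := by
    intro A A' hA hA' hss hne
    simp only [hσdef] at hne
    simp only [hρdef]
    have hsub := BB_mono K t c hss.1
    by_cases h1 : BB K t c A = ∅
    · by_cases h2 : BB K t c A' = ∅
      · rw [if_pos h1, if_pos h2]
        exact Finset.card_lt_card hss
      · rw [if_pos h1, if_neg h2]
        have := hAcard A hA h1
        have := Finset.card_pos.2 (Finset.nonempty_iff_ne_empty.2 h2)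
        omega
    · have h2 : BB K t c A' ≠ ∅ := by
        intro h2
        rw [h2] at hsub
        exact h1 (Finset.subset_empty.1 hsub)
      rw [if_neg h1, if_neg h2] at hne ⊢
      have : BB K t c A ⊂ BB K t c A' := by
        rw [Finset.ssubset_iff_subset_ne]
        exact ⟨hsub, fun h => hne (by rw [h])⟩
      have := Finset.card_lt_card this
      omega
  have hchain : l.IsChain (fun A A' => ρ A < ρ A') := by
    rw [List.isChain_iff_getElem] at hl4 ⊢
    intro i hi
    refine hstrict _ _ (hl3 _ (by simp)) (hl3 _ (by simp)) ?_ (hl4 i hi)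
    exact List.pairwise_iff_getElem.1 hl2 i (i + 1) (by omega) hi (by omega)
  have hpw : (l.map ρ).Pairwise (· < ·) := by
    rw [← List.isChain_iff_pairwise, List.isChain_map]
    exact hchain
  have hnd : (l.map ρ).Nodup := hpw.imp (fun h => h.ne)
  have hsub : (l.map ρ).toFinset ⊆ Finset.Icc 1 (p * (K - 1) + t * (p - 1)) := by
    intro m hm
    rw [List.mem_toFinset] at hm
    obtain ⟨A, hA, rfl⟩ := List.mem_map.1 hm
    have hv := hl3 A hA
    rw [Finset.mem_Icc]
    simp only [hρdef]
    split_ifs with hB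
    · have := hAcard A hv hB
      have := Finset.card_pos.2 hv.1
      omega
    · have := hBcard A hv
      have := Finset.card_pos.2 (Finset.nonempty_iff_ne_empty.2 hB)
      omega
  have := Finset.card_le_card hsub
  rw [List.toFinset_card_of_nodup hnd] at this
  simp at this
  omega

end afl
end ZpT

lemma strictMono_gap {m : ℕ} (φ : Fin m → ℕ) (hφ : StrictMono φ) (i j : Fin m) (h : i ≤ j) :
    φ i + (j.val - i.val) ≤ φ j := by
  obtain ⟨d, hd⟩ : ∃ d, j.val = i.val + d := ⟨j.val - i.val, by
    have : i.val ≤ j.val := h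
    omega⟩
  induction d generalizing j with
  | zero =>
    have : i = j := Fin.ext (by omega)
    subst this; simp
  | succ d ih =>
    have hlt := j.isLt
    have h1 := ih ⟨i.val + d, by omega⟩ (by simp [Fin.le_def]) rfl
    have h2 : φ ⟨i.val + d, by omega⟩ < φ j := hφ (by simp [Fin.lt_def]; omega)
    simp only at h1
    omega

lemma stable_map {m n s : ℕ} (hs : 1 ≤ s) (φ : Fin m ↪ Fin n)
    (hφ : StrictMono fun i => (φ i).val)
    (S : Finset (Fin m)) (hS : Stable m s S) : Stable n s (S.map φ) := by
  have key : ∀ i ∈ S, ∀ j ∈ S, i < j →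
      s ≤ (φ j).val - (φ i).val ∧ (φ j).val - (φ i).val ≤ n - s := by
    intro i hi j hj hij
    have hij' : i.val < j.val := hij
    have h := hS i hi j hj hij.ne
    rw [max_eq_right hij'.le, min_eq_left hij'.le] at h
    have hjm := j.isLt
    have g1 := strictMono_gap _ hφ i j hij.le
    have g2 := strictMono_gap _ hφ ⟨0, by omega⟩ i (by simp [Fin.le_def])
    have g3 := strictMono_gap _ hφ j ⟨m - 1, by omega⟩ (by simp [Fin.le_def]; omega)
    have g4 := (φ ⟨m - 1, by omega⟩).isLt
    simp only at g1 g2 g3 g4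
    omega
  intro a ha b hb hab
  obtain ⟨i, hi, rfl⟩ := Finset.mem_map.1 ha
  obtain ⟨j, hj, rfl⟩ := Finset.mem_map.1 hb
  rcases lt_trichotomy i j with h | h | h
  · have hlt : (φ i).val < (φ j).val := hφ h
    rw [max_eq_right hlt.le, min_eq_left hlt.le]
    exact key i hi j hj h
  · exact absurd (congrArg φ h) hab
  · have hlt : (φ j).val < (φ i).val := hφ h
    rw [max_eq_left hlt.le, min_eq_right hlt.le]
    exact key j hj i hi h

lemma mem_stableSets {n s k : ℕ} {A : Finset (Fin n)} :
    A ∈ stableSets n s k ↔ A.card = k ∧ Stable n s A := by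
  simp [stableSets]

/-- Restricting a coloring to a subset of the ground set. -/
lemma restrict_edge {m n k r s t : ℕ} (hs : 1 ≤ s)
    (hno : ¬ ∃ c, IsKneserColoring m r t (stableSets m s k) c)
    (c : Finset (Fin n) → ℕ) (hc : ∀ A ∈ stableSets n s k, c A ∈ Finset.Icc 1 t)
    (A : Finset ℕ) (hA : A ⊆ range n) (hAm : A.card = m) (ht : 1 ≤ t) :
    ∃ j, j < t ∧ ∃ E : Finset (Finset (Fin n)), E ⊆ stableSets n s k ∧ E.card = r ∧
      ((E : Set (Finset (Fin n))).Pairwise fun A B => Disjoint A B) ∧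
      (∀ S ∈ E, ∀ a ∈ S, a.val ∈ A) ∧ ∀ S ∈ E, c S = j + 1 := by
  set ψ := A.orderEmbOfFin hAm with hψ
  have hψA : ∀ i, ψ i ∈ A := fun i => A.orderEmbOfFin_mem hAm i
  have hψn : ∀ i, ψ i < n := fun i => Finset.mem_range.1 (hA (hψA i))
  let φ : Fin m ↪ Fin n := ⟨fun i => ⟨ψ i, hψn i⟩, fun i j h => ψ.injective (by simpa using h)⟩
  have hφ : StrictMono fun i => (φ i).val := ψ.strictMono
  have hst : ∀ S ∈ stableSets m s k, S.map φ ∈ stableSets n s k := by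
    intro S hS
    rw [mem_stableSets] at hS ⊢
    exact ⟨by rw [Finset.card_map, hS.1], stable_map hs φ hφ S hS.2⟩
  by_contra hcon
  apply hno
  refine ⟨fun S => c (S.map φ), fun S hS => hc _ (hst S hS), ?_⟩
  rintro E hE hEr hEd ⟨i, hi⟩
  apply hcon
  have himg : ∀ S ∈ E.image (Finset.map φ), S ∈ stableSets n s k := by
    intro S hS
    obtain ⟨S', hS', rfl⟩ := Finset.mem_image.1 hS
    exact hst S' (hE hS')
  have hicc : ∀ S ∈ E, i ∈ Finset.Icc 1 t := fun S hS => hi S hS ▸ hc _ (hst S (hE hS))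
  have hj : ∃ j, j < t ∧ ∀ S ∈ E, i = j + 1 := by
    rcases E.eq_empty_or_nonempty with h | ⟨S, hS⟩
    · exact ⟨0, by omega, by simp [h]⟩
    · have := Finset.mem_Icc.1 (hicc S hS)
      exact ⟨i - 1, by omega, fun _ _ => by omega⟩
  obtain ⟨j, hjt, hj⟩ := hj
  refine ⟨j, hjt, E.image (Finset.map φ), himg, ?_, ?_, ?_, ?_⟩
  · rw [Finset.card_image_of_injective _ (Finset.map_injective φ), hEr]
  · intro S hS S' hS' hne
    obtain ⟨U, hU, rfl⟩ := Finset.mem_image.1 (Finset.mem_coe.1 hS)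
    obtain ⟨U', hU', rfl⟩ := Finset.mem_image.1 (Finset.mem_coe.1 hS')
    simp only [Finset.disjoint_map]
    exact hEd hU hU' (fun h => hne (by rw [h]))
  · intro S hS a ha
    obtain ⟨U, hU, rfl⟩ := Finset.mem_image.1 hS
    obtain ⟨b, hb, rfl⟩ := Finset.mem_map.1 ha
    exact hψA b
  · intro S hS
    obtain ⟨U, hU, rfl⟩ := Finset.mem_image.1 hS
    rw [← hj U hU]
    exact hi U hU

lemma lower_bound {n k r s p t : ℕ} (hk : 1 ≤ k) (hs : 1 ≤ s) (hr : 2 ≤ r) (hp : p.Prime)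
    (ht : 1 ≤ t)
    (hno : ¬ ∃ c, IsKneserColoring (t * (r - 1) + r * (k - 1) + 1) r t
      (stableSets (t * (r - 1) + r * (k - 1) + 1) s k) c)
    (hn : t * (p * r - 1) + p * r * (k - 1) < n)
    (c : Finset (Fin n) → ℕ) (hc : IsKneserColoring n (p * r) t (stableSets n s k) c) : False := by
  have : Fact p.Prime := ⟨hp⟩
  have hp2 := hp.two_le
  set m := t * (r - 1) + r * (k - 1) + 1 with hm
  have hex := fun A hA hAm => restrict_edge hs hno c hc.1 A hA hAm ht
  choose C hC E hE1 hE2 hE3 hE4 hE5 using hex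
  classical
  have hbound : p * (m - 1) + t * (p - 1) < n := by
    refine lt_of_eq_of_lt ?_ hn
    obtain ⟨r', rfl⟩ : ∃ r', r = r' + 1 := ⟨r - 1, by omega⟩
    obtain ⟨p', rfl⟩ : ∃ p', p = p' + 1 := ⟨p - 1, by omega⟩
    have h1 : (p' + 1) * (r' + 1) - 1 = p' * r' + p' + r' := by
      have : (p' + 1) * (r' + 1) = p' * r' + p' + r' + 1 := by ring
      omega
    rw [h1, hm]
    simp only [Nat.add_sub_cancel]
    ring
  obtain ⟨f, hf1, hf2, j, hj⟩ := ZpT.afl (p := p) n m t (by omega)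
    (fun A => if h : A ⊆ range n ∧ A.card = m then C A h.1 h.2 else 0)
    (fun S h1 h2 => by rw [dif_pos ⟨h1, h2⟩]; exact hC S h1 h2) hbound
  have hj' : ∀ x, C (f x) (hf1 x).1 (hf1 x).2 = j := by
    intro x
    have := hj x
    rwa [dif_pos (hf1 x)] at this
  let EE : ZMod p → Finset (Finset (Fin n)) := fun x => E (f x) (hf1 x).1 (hf1 x).2
  have hne : ∀ x, ∀ S ∈ EE x, S.Nonempty := by
    intro x S hS
    have := (mem_stableSets.1 (hE1 (f x) (hf1 x).1 (hf1 x).2 hS)).1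
    exact Finset.card_pos.1 (by omega)
  have hdis : ∀ x y, x ≠ y → ∀ S ∈ EE x, ∀ S' ∈ EE y, Disjoint S S' := by
    intro x y hxy S hS S' hS'
    rw [Finset.disjoint_left]
    intro a ha ha'
    exact Finset.disjoint_left.1 (hf2 x y hxy) (hE4 _ _ _ S hS a ha) (hE4 _ _ _ S' hS' a ha')
  apply hc.2 (univ.biUnion EE)
  · intro S hS
    obtain ⟨x, _, hx⟩ := Finset.mem_biUnion.1 hS
    exact hE1 _ _ _ hx
  · rw [Finset.card_biUnion]
    · rw [Finset.sum_congr rfl fun x _ => hE2 (f x) (hf1 x).1 (hf1 x).2]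
      simp [ZMod.card]
    · intro x _ y _ hxy
      show Disjoint (EE x) (EE y)
      rw [Finset.disjoint_left]
      intro S hS hS'
      have := hdis x y hxy S hS S hS'
      obtain ⟨a, ha⟩ := hne x S hS
      exact Finset.disjoint_left.1 this ha ha
  · intro S hS S' hS' hSS
    obtain ⟨x, _, hx⟩ := Finset.mem_biUnion.1 (Finset.mem_coe.1 hS)
    obtain ⟨y, _, hy⟩ := Finset.mem_biUnion.1 (Finset.mem_coe.1 hS')
    by_cases hxy : x = y
    · subst hxy
      exact hE3 _ _ _ hx hy hSS
    · exact hdis x y hxy S hx S' hy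
  · refine ⟨j + 1, ?_⟩
    intro S hS
    obtain ⟨x, _, hx⟩ := Finset.mem_biUnion.1 hS
    rw [← hj' x]
    exact hE5 _ _ _ S hx

lemma upper_bound {n k R t : ℕ} (hk : 1 ≤ k) (hR : 2 ≤ R) (ht : 1 ≤ t)
    (F : Finset (Finset (Fin n))) (hF : ∀ A ∈ F, A.card = k)
    (hn : n ≤ t * (R - 1) + R * (k - 1)) :
    ∃ c, IsKneserColoring n R t F c := by
  let mn : Finset (Fin n) → ℕ := fun A => sInf {x | ∃ a ∈ A, a.val = x}
  have hmem : ∀ A ∈ F, ∃ a ∈ A, a.val = mn A := by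
    intro A hA
    have : A.Nonempty := Finset.card_pos.1 (by rw [hF A hA]; omega)
    obtain ⟨a, ha⟩ := this
    exact Nat.sInf_mem (s := {x | ∃ a ∈ A, a.val = x}) ⟨a.val, a, ha, rfl⟩
  have hle : ∀ A : Finset (Fin n), ∀ a ∈ A, mn A ≤ a.val := fun A a ha => Nat.sInf_le ⟨a, ha, rfl⟩
  refine ⟨fun A => min (mn A / (R - 1)) (t - 1) + 1, ?_, ?_⟩
  · intro A _
    rw [Finset.mem_Icc]
    dsimp only
    generalize mn A / (R - 1) = w
    omega
  · rintro E hE hER hEd ⟨i, hi⟩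
    by_cases hit : i < t
    · -- minima are distinct and lie in a short block
      have hinj : Set.InjOn mn (E : Set (Finset (Fin n))) := by
        intro A hA B hB hAB
        by_contra hne
        obtain ⟨a, ha, ha'⟩ := hmem A (hE hA)
        obtain ⟨b, hb, hb'⟩ := hmem B (hE hB)
        have : a = b := Fin.ext (by rw [ha', hb', hAB])
        subst this
        exact Finset.disjoint_left.1 (hEd hA hB hne) ha hb
      have hsub : E.image mn ⊆ Finset.Ico ((i - 1) * (R - 1)) ((i - 1) * (R - 1) + (R - 1)) := by
        intro x hx
        obtain ⟨A, hA, rfl⟩ := Finset.mem_image.1 hx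
        have h1 : min (mn A / (R - 1)) (t - 1) + 1 = i := hi A hA
        have h2 : mn A / (R - 1) = i - 1 := by
          revert h1
          generalize mn A / (R - 1) = w
          intro h1
          omega
        have h3 := Nat.div_add_mod (mn A) (R - 1)
        have h4 := Nat.mod_lt (mn A) (show R - 1 > 0 by omega)
        rw [h2, mul_comm] at h3
        rw [Finset.mem_Ico]
        omega
      have := Finset.card_le_card hsub
      rw [Finset.card_image_of_injOn hinj, hER, Nat.card_Ico] at this
      omega
    · have hall : ∀ A ∈ E, ∀ a ∈ A, (t - 1) * (R - 1) ≤ a.val := by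
        intro A hA a ha
        refine le_trans ?_ (hle A a ha)
        have h1 : min (mn A / (R - 1)) (t - 1) + 1 = i := hi A hA
        rw [← Nat.le_div_iff_mul_le (by omega)]
        omega
      have hsub : (E.biUnion id).image Fin.val ⊆ Finset.Ico ((t - 1) * (R - 1)) n := by
        intro x hx
        obtain ⟨a, ha, rfl⟩ := Finset.mem_image.1 hx
        obtain ⟨A, hA, haA⟩ := Finset.mem_biUnion.1 ha
        rw [Finset.mem_Ico]
        exact ⟨hall A hA a haA, a.isLt⟩
      have hcard := Finset.card_le_card hsub
      rw [Finset.card_image_of_injective _ Fin.val_injective, Finset.card_biUnion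
        (show (E : Set (Finset (Fin n))).PairwiseDisjoint id from
          fun A hA B hB hne => hEd hA hB hne),
        Finset.sum_congr rfl (fun A hA => (hF A (hE hA) : (id A).card = k)), Nat.card_Ico] at hcard
      simp only [Finset.sum_const, smul_eq_mul, hER] at hcard
      obtain ⟨t', rfl⟩ : ∃ t', t = t' + 1 := ⟨t - 1, by omega⟩
      obtain ⟨k', rfl⟩ : ∃ k', k = k' + 1 := ⟨k - 1, by omega⟩
      simp only [Nat.add_sub_cancel] at *
      have e1 : (t' + 1) * (R - 1) = t' * (R - 1) + (R - 1) := by ring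
      have e2 : R * (k' + 1) = R * k' + R := by ring
      rw [e1] at hn
      rw [e2] at hcard
      omega

theorem stmt14 (k r s p : ℕ) (hk : 1 ≤ k) (hs : 2 ≤ s) (hsr : s ≤ r) (hp : p.Prime)
    (H : ∀ n : ℕ, r * k ≤ n →
      (kneserChrom n r (stableSets n s k) : ℤ) =
        ⌈((n : ℚ) - (r : ℚ) * ((k : ℚ) - 1)) / ((r : ℚ) - 1)⌉) :
    ∀ n : ℕ, p * r * k ≤ n →
      (kneserChrom n (p * r) (stableSets n s k) : ℤ) =
        ⌈((n : ℚ) - (p : ℚ) * (r : ℚ) * ((k : ℚ) - 1)) / ((p : ℚ) * (r : ℚ) - 1)⌉ := by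
  intro n hn
  have hp2 := hp.two_le
  have hr2 : 2 ≤ r := hs.trans hsr
  have hR2 : 2 ≤ p * r := by nlinarith
  -- the hypothesis excludes colorings with too few colors
  have hno : ∀ t, 1 ≤ t → ¬ ∃ c, IsKneserColoring (t * (r - 1) + r * (k - 1) + 1) r t
      (stableSets (t * (r - 1) + r * (k - 1) + 1) s k) c := by
    intro t ht hex
    have hge : r * k ≤ t * (r - 1) + r * (k - 1) + 1 := by
      obtain ⟨k', rfl⟩ : ∃ k', k = k' + 1 := ⟨k - 1, by omega⟩
      have : 1 * (r - 1) ≤ t * (r - 1) := Nat.mul_le_mul_right _ ht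
      have e2 : r * (k' + 1) = r * k' + r := by ring
      simp only [Nat.add_sub_cancel]
      omega
    have h := H _ hge
    have hle : kneserChrom (t * (r - 1) + r * (k - 1) + 1) r
      (stableSets (t * (r - 1) + r * (k - 1) + 1) s k) ≤ t := Nat.sInf_le hex
    have hceil : (t : ℤ) <
        ⌈(((t * (r - 1) + r * (k - 1) + 1 : ℕ) : ℚ) - (r : ℚ) * ((k : ℚ) - 1)) / ((r : ℚ) - 1)⌉ := by
      rw [Int.lt_ceil]
      have hr' : (0 : ℚ) < (r : ℚ) - 1 := by
        have : (2 : ℚ) ≤ r := by exact_mod_cast hr2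
        linarith
      rw [lt_div_iff₀ hr']
      push_cast [Nat.cast_sub hk, Nat.cast_sub (show 1 ≤ r by omega)]
      linarith
    rw [← h] at hceil
    have : t < kneserChrom (t * (r - 1) + r * (k - 1) + 1) r
      (stableSets (t * (r - 1) + r * (k - 1) + 1) s k) := by exact_mod_cast hceil
    omega
  have hRq : (0 : ℚ) < (p : ℚ) * (r : ℚ) - 1 := by
    have : (2 : ℚ) ≤ ((p * r : ℕ) : ℚ) := by exact_mod_cast hR2
    push_cast at this
    linarith
  have hlow : ∀ t, 1 ≤ t → t * (p * r - 1) + p * r * (k - 1) < n →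
      ¬ ∃ c, IsKneserColoring n (p * r) t (stableSets n s k) c := by
    rintro t ht htn ⟨c, hc⟩
    exact lower_bound hk (by omega) hr2 hp ht (hno t ht) htn c hc
  have hsucc : p * r * k = (p * r - 1) + p * r * (k - 1) + 1 := by
    obtain ⟨k', rfl⟩ : ∃ k', k = k' + 1 := ⟨k - 1, by omega⟩
    have e2 : p * r * (k' + 1) = p * r * k' + p * r := by ring
    simp only [Nat.add_sub_cancel]
    omega
  -- integer form of the conditions
  have hcast : ∀ t : ℕ, (n ≤ t * (p * r - 1) + p * r * (k - 1)) ↔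
      ⌈((n : ℚ) - (p : ℚ) * (r : ℚ) * ((k : ℚ) - 1)) / ((p : ℚ) * (r : ℚ) - 1)⌉ ≤ (t : ℤ) := by
    intro t
    rw [Int.ceil_le, div_le_iff₀ hRq, sub_le_iff_le_add]
    rw [← Nat.cast_le (α := ℚ)]
    push_cast [Nat.cast_sub hk, Nat.cast_sub (show 1 ≤ p * r by omega)]
    rfl
  set q := ⌈((n : ℚ) - (p : ℚ) * (r : ℚ) * ((k : ℚ) - 1)) / ((p : ℚ) * (r : ℚ) - 1)⌉ with hq
  have hq1 : 1 < q := by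
    have := (hcast 1).not.1 (by omega)
    push_cast at this
    omega
  obtain ⟨t, ht⟩ : ∃ t : ℕ, q = t := ⟨q.toNat, by omega⟩
  rw [ht]
  have ht1 : 1 < t := by omega
  congr 1
  apply le_antisymm
  · apply Nat.sInf_le
    exact upper_bound hk hR2 (by omega) _ (fun A hA => (mem_stableSets.1 hA).1)
      ((hcast t).2 (by omega))
  · refine le_csInf ?_ ?_
    · exact ⟨t, upper_bound hk hR2 (by omega) _ (fun A hA => (mem_stableSets.1 hA).1)
        ((hcast t).2 (by omega))⟩
    · rintro t' ⟨c, hc⟩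
      by_contra hlt
      rcases Nat.eq_zero_or_pos t' with h0 | h0
      · subst h0
        refine hlow 1 le_rfl (by omega) ⟨c, ?_, hc.2⟩
        intro A hA
        have := hc.1 A hA
        simp at this
      · refine hlow t' h0 ?_ ⟨c, hc⟩
        have := (hcast t').not.2 (by omega)
        omega
end

section
/- Let a, k, n, r be positive integers with n ≥ rk. If 2^a divides r, then χ(KG^r(n,k)_{2^a-stab}) = ⌈(n − r(k−1)) / (r − 1)⌉. -/
open Finset

namespace KH

section chains
variable {X Y R : Type*} [CommRing R]

/-- Simplicial coboundary on cochains on ordered tuples (lists). -/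
def del : List X → (List X → R) → R
  | [], _ => 0
  | a :: l, c => c l - del l (fun m => c (a :: m))

/-- Prism operator. -/
def prism (f : X → X) : List X → (List X → R) → R
  | [], _ => 0
  | a :: l, c => c (a :: (a :: l).map f) - prism f l (fun m => c (a :: m))

/-- Cone operator. -/
def cone (e : X) (f : X → X) (l : List X) (c : List X → R) : R :=
  c (e :: l.map f) - prism f l c

theorem del_zero (l : List X) : del l (fun _ => (0 : R)) = 0 := by
  induction l with
  | nil => rfl
  | cons a l ih => simp [del, ih]

theorem del_sub (l : List X) (c c' : List X → R) :
    del l (fun m => c m - c' m) = del l c - del l c' := by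
  induction l generalizing c c' with
  | nil => simp [del]
  | cons a l ih => simp only [del, ih]; ring

theorem del_sum {ι : Type*} (s : Finset ι) (l : List X) (c : ι → List X → R) :
    del l (fun m => ∑ i ∈ s, c i m) = ∑ i ∈ s, del l (c i) := by
  induction l generalizing c with
  | nil => simp [del]
  | cons a l ih => simp only [del, ih, Finset.sum_sub_distrib]

theorem del_map (f : X → Y) (l : List X) (c : List Y → R) :
    del (l.map f) c = del l (fun m => c (m.map f)) := by
  induction l generalizing c with
  | nil => simp [del]
  | cons a l ih => simp only [del, ih, List.map_cons]

theorem del_del (l : List X) (c : List X → R) : del l (fun m => del m c) = 0 := by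
  induction l generalizing c with
  | nil => simp [del]
  | cons a l ih => simp only [del, del_sub, ih]; ring

theorem prism_sub (f : X → X) (l : List X) (c c' : List X → R) :
    prism f l (fun m => c m - c' m) = prism f l c - prism f l c' := by
  induction l generalizing c c' with
  | nil => simp [prism]
  | cons a l ih => simp only [prism, ih]; ring

theorem prism_del (f : X → X) (l : List X) (b : List X → R) :
    prism f l (fun m => del m b) + del l (fun m => prism f m b) = b (l.map f) - b l := by
  induction l generalizing b with
  | nil => simp [del, prism]
  | cons a l ih =>
    have := ih (fun m => b (a :: m))
    simp only [del, prism, prism_sub, del_sub, List.map_cons, del_map] at this ⊢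
    linear_combination this

theorem cone_del (e : X) (f : X → X) (l : List X) (b : List X → R) :
    cone e f l (fun m => del m b) = b l - del l (fun m => cone e f m b) := by
  have := prism_del f l b
  simp only [cone, del, del_sub, del_map]
  linear_combination -this

theorem prism_eq_zero (f : X → X) (l : List X) (c : List X → R)
    (h : ∀ u a v, l = u ++ a :: v → c (u ++ a :: (a :: v).map f) = 0) : prism f l c = 0 := by
  induction l generalizing c with
  | nil => rfl
  | cons a l ih =>
    have h1 := h [] a l rfl
    have h2 := ih (fun m => c (a :: m)) (fun u b v huv => h (a :: u) b v (by simp [huv]))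
    simp only [List.nil_append] at h1
    simp only [prism, h1, h2, sub_zero]

/-- norm operator or difference operator depending on parity -/
def Mop (p : ℕ) (g : X → X) (d : ℕ) (c : List X → R) (l : List X) : R :=
  if Even d then ∑ j ∈ range p, c (l.map g^[j]) else c (l.map g) - c l

theorem Mop_sub (p : ℕ) (g : X → X) (d : ℕ) (c c' : List X → R) :
    Mop p g d (fun l => c l - c' l) = fun l => Mop p g d c l - Mop p g d c' l := by
  funext l
  unfold Mop
  split_ifs
  · simp
  · ring

theorem Mop_del (p : ℕ) (g : X → X) (d : ℕ) (c : List X → R) :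
    Mop p g d (fun l => del l c) = fun l => del l (Mop p g d c) := by
  funext l
  unfold Mop
  split_ifs
  · simp [del_sum, del_map]
  · simp [del_sub, del_map]

theorem Mop_Mop (p : ℕ) (g : X → X) (hg : ∀ x, g^[p] x = x) (d : ℕ) (c : List X → R) :
    Mop p g d (Mop p g (d + 1) c) = fun _ => 0 := by
  have hgp : g^[p] = id := funext hg
  have key : ∀ l : List X, ∑ j ∈ range p, (c (l.map g^[j+1]) - c (l.map g^[j])) = 0 := by
    intro l
    rw [Finset.sum_range_sub (fun j => c (l.map g^[j]))]
    simp [hgp]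
  funext l
  unfold Mop
  by_cases hd : Even d
  · have : ¬ Even (d + 1) := by simpa [Nat.even_add_one] using hd
    simp only [hd, this, if_true, if_false, List.map_map, ← Function.iterate_succ']
    exact key l
  · have : Even (d + 1) := by simpa [Nat.even_add_one] using hd
    simp only [hd, this, if_true, if_false, List.map_map, ← Finset.sum_sub_distrib, ← Function.iterate_succ]
    exact key l

theorem Mop_nil (p : ℕ) (g : X → X) (d : ℕ) (hd : ¬ Even d) (c : List X → R) :
    Mop p g d c [] = 0 := by
  simp [Mop, hd]

theorem Mop_map (p : ℕ) (g : X → X) (g' : Y → Y) (s : X → Y) (hs : ∀ x, s (g x) = g' (s x))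
    (d : ℕ) (c : List Y → R) :
    Mop p g d (fun l => c (l.map s)) = fun l => Mop p g' d c (l.map s) := by
  have h1 : ∀ j, s ∘ g^[j] = g'^[j] ∘ s := by
    intro j
    have : Function.Semiconj s g g' := hs
    exact (this.iterate_right j).comp_eq
  have h2 : s ∘ g = g' ∘ s := h1 1
  funext l
  simp [Mop, h1, h2]

/-- Evaluation on the fundamental chain of dimension `d`. -/
def Xf (p : ℕ) (g : X → X) (e : ℕ → X) (push : ℕ → X → X) : ℕ → (List X → R) → R
  | 0, c => c [e 0]
  | d + 1, c => Xf p g e push d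
      (Mop p g (d + 1) (fun l => cone (e (d + 1)) (push (d + 1)) l c))

theorem cone_sub (e : X) (f : X → X) (l : List X) (c c' : List X → R) :
    cone e f l (fun m => c m - c' m) = cone e f l c - cone e f l c' := by
  simp only [cone, prism_sub]; ring

theorem Xf_sub (p : ℕ) (g : X → X) (e : ℕ → X) (push : ℕ → X → X) (d : ℕ) (c c' : List X → R) :
    Xf p g e push d (fun l => c l - c' l) = Xf p g e push d c - Xf p g e push d c' := by
  induction d generalizing c c' with
  | zero => rfl
  | succ d ih => simp only [Xf, cone_sub, Mop_sub, ih]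

theorem Xf_zero (p : ℕ) (g : X → X) (e : ℕ → X) (push : ℕ → X → X) (d : ℕ) :
    Xf p g e push d (fun _ => (0 : R)) = 0 := by
  have := Xf_sub p g e push d (fun _ => (0 : R)) (fun _ => 0)
  simpa using this

theorem Xf_del (p : ℕ) (g : X → X) (hg : ∀ x, g^[p] x = x) (e : ℕ → X) (push : ℕ → X → X)
    (d : ℕ) (b : List X → R) :
    Xf p g e push (d + 1) (fun l => del l b) = Xf p g e push d (Mop p g (d + 1) b) := by
  induction d generalizing b with
  | zero =>
    simp only [Xf, cone_del, Mop_sub, Mop_del, del]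
    rw [Mop_nil p g _ (by decide)]
    simp
  | succ d ih =>
    rw [Xf]
    simp only [cone_del, Mop_sub, Mop_del, Xf_sub]
    rw [ih, Mop_Mop p g hg, Xf_zero, sub_zero]

theorem Xf_local (p : ℕ) (g : X → X) (e : ℕ → X) (push : ℕ → X → X) (N : ℕ)
    (le : X → X → Prop) (V : ℕ → X → Prop)
    (htrans : ∀ x y z, le x y → le y z → le x z)
    (hV0 : V 0 (e 0))
    (hVe : ∀ d, d + 1 < N → V (d + 1) (e (d + 1)))
    (hVp : ∀ d x, d + 1 < N → V d x → V (d + 1) (push (d + 1) x))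
    (hVs : ∀ d x, d + 1 < N → V d x → V (d + 1) x)
    (hVg : ∀ d x, V d x → V d (g x))
    (hlg : ∀ x y, le x y → le (g x) (g y))
    (hlp : ∀ d x, d + 1 < N → V d x → le x (push (d + 1) x))
    (hle : ∀ d x, d + 1 < N → V d x → le (e (d + 1)) (push (d + 1) x))
    (hpp : ∀ d x y, d + 1 < N → V d x → V d y → le x y → le (push (d + 1) x) (push (d + 1) y))
    (d : ℕ) (hd : d < N) (c : List X → R)
    (hc : ∀ l : List X, l.length = d + 1 → (∀ x ∈ l, V d x) → l.Pairwise le → c l = 0) :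
    Xf p g e push d c = 0 := by
  induction d generalizing c with
  | zero => exact hc _ rfl (by simpa using hV0) (by simp)
  | succ d ih =>
    rw [Xf]
    apply ih (by omega)
    intro l hl hlV hlP
    have hK : ∀ l : List X, l.length = d + 1 → (∀ x ∈ l, V d x) → l.Pairwise le →
        cone (e (d + 1)) (push (d + 1)) l c = 0 := by
      intro l hl hlV hlP
      unfold cone
      rw [hc, prism_eq_zero, sub_zero]
      · rintro u a v rfl
        apply hc
        · simp at hl ⊢; omega
        · intro x hx
          simp only [List.mem_append, List.mem_cons, List.mem_map] at hx hlV
          rcases hx with hx | rfl | ⟨y, hy, rfl⟩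
          · exact hVs _ _ hd (hlV _ (Or.inl hx))
          · exact hVs _ _ hd (hlV _ (Or.inr (Or.inl rfl)))
          · exact hVp _ _ hd (hlV _ (Or.inr hy))
        · rw [List.pairwise_append] at hlP ⊢
          obtain ⟨h1, h2, h3⟩ := hlP
          have hVav : ∀ x ∈ a :: v, V d x := fun x hx => hlV x (List.mem_append_right _ hx)
          have hap : ∀ y ∈ a :: v, le a (push (d + 1) y) := by
            intro y hy
            rcases List.mem_cons.1 hy with rfl | hy
            · exact hlp _ _ hd (hVav _ (by simp))
            · exact htrans _ _ _ (List.rel_of_pairwise_cons h2 hy)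
                (hlp _ _ hd (hVav _ (by simp [hy])))
          refine ⟨h1, ?_, ?_⟩
          · rw [List.pairwise_cons]
            refine ⟨?_, ?_⟩
            · intro x hx
              obtain ⟨y, hy, rfl⟩ := List.mem_map.1 hx
              exact hap y hy
            · rw [List.pairwise_map]
              exact h2.imp_of_mem (fun hx hy h => hpp _ _ _ hd (hVav _ hx) (hVav _ hy) h)
          · intro x hx y hy
            rcases List.mem_cons.1 hy with rfl | hy
            · exact h3 x hx _ (by simp)
            · obtain ⟨z, hz, rfl⟩ := List.mem_map.1 hy
              exact htrans _ _ _ (h3 x hx z hz) (hlp _ _ hd (hVav _ hz))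
      · simp [hl]
      · intro x hx
        rcases List.mem_cons.1 hx with rfl | hx
        · exact hVe _ hd
        · obtain ⟨y, hy, rfl⟩ := List.mem_map.1 hx
          exact hVp _ _ hd (hlV _ hy)
      · rw [List.pairwise_cons, List.pairwise_map]
        refine ⟨?_, hlP.imp_of_mem (fun hx hy h => hpp _ _ _ hd (hlV _ hx) (hlV _ hy) h)⟩
        intro x hx
        obtain ⟨y, hy, rfl⟩ := List.mem_map.1 hx
        exact hle _ _ hd (hlV _ hy)
    have hVgj : ∀ j x, V d x → V d (g^[j] x) := by
      intro j
      induction j with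
      | zero => intro x hx; exact hx
      | succ j ihj => intro x hx; exact ihj _ (hVg _ _ hx)
    have hlgj : ∀ j x y, le x y → le (g^[j] x) (g^[j] y) := by
      intro j
      induction j with
      | zero => intro x y h; exact h
      | succ j ihj => intro x y h; exact ihj _ _ (hlg _ _ h)
    have hK2 : ∀ j, cone (e (d + 1)) (push (d + 1)) (l.map g^[j]) c = 0 := by
      intro j
      apply hK
      · simpa using hl
      · intro x hx
        obtain ⟨y, hy, rfl⟩ := List.mem_map.1 hx
        exact hVgj _ _ (hlV _ hy)
      · rw [List.pairwise_map]
        exact hlP.imp (fun h => hlgj _ _ _ h)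
    have h1 := hK2 1
    have h0 := hK2 0
    simp only [Function.iterate_one] at h1
    simp only [Function.iterate_zero, List.map_id] at h0
    unfold Mop
    simp only [hK2, h1, h0]
    simp

end chains

section words
variable {p : ℕ}

/-- normalized cochains -/
def Norm (c : List (ZMod p) → ZMod p) : Prop := ∀ u a v, c (u ++ a :: a :: v) = 0

theorem Norm.del {c : List (ZMod p) → ZMod p} (hc : Norm c) : Norm (fun l => del l c) := by
  intro u a v
  induction u generalizing c with
  | nil =>
    have : (fun m => c (a :: a :: m)) = fun _ => 0 := by
      funext m; exact hc [] a m
    simp [KH.del, this, del_zero]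
  | cons x u ih =>
    have h1 : Norm (fun m => c (x :: m)) := fun u a v => hc (x :: u) a v
    have h2 := ih h1
    have h3 := hc u a v
    simp only [List.cons_append, KH.del] at h2 ⊢
    rw [h2, h3, sub_zero]

/-- shift -/
def sh : ZMod p → ZMod p := fun x => x + 1

theorem sh_iter (j : ℕ) : (sh : ZMod p → ZMod p)^[j] = fun x => x + (j : ZMod p) := by
  induction j with
  | zero => funext x; simp
  | succ j ih => rw [Function.iterate_succ', ih]; funext x; simp [sh]; ring

theorem Norm.map {c : List (ZMod p) → ZMod p} (hc : Norm c) (f : ZMod p → ZMod p)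
    (u : List (ZMod p)) (a : ZMod p) (v : List (ZMod p)) : c ((u ++ a :: a :: v).map f) = 0 := by
  simpa using hc (u.map f) (f a) (v.map f)

theorem exact_step [NeZero p] (d : ℕ) (c : List (ZMod p) → ZMod p) (hc : Norm c) (h0 : c [] = 0)
    (hM : Mop p sh d c = fun _ => 0) :
    ∃ b : List (ZMod p) → ZMod p, Norm b ∧ Mop p sh (d + 1) b = c := by
  by_cases hd : Even d
  · have hd' : ¬ Even (d + 1) := by simpa [Nat.even_add_one] using hd
    have hN : ∀ l : List (ZMod p), ∑ j ∈ range p, c (l.map (fun x => x + (j : ZMod p))) = 0 := by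
      intro l
      have := congrFun hM l
      simpa [Mop, hd, sh_iter] using this
    refine ⟨fun l => match l with
      | [] => 0
      | x :: m => ∑ j ∈ range x.val, c ((x :: m).map (fun y => y - x + (j : ZMod p))), ?_, ?_⟩
    · intro u a v
      rcases u with _ | ⟨x, u⟩
      · apply Finset.sum_eq_zero
        intro j _
        exact hc.map _ [] a v
      · apply Finset.sum_eq_zero
        intro j _
        exact hc.map _ (x :: u) a v
    · funext l
      rcases l with _ | ⟨x, m⟩
      · simp [Mop, hd', h0]
      · simp only [Mop, hd', if_false, List.map_cons]
        have e1 : ∀ j : ℕ, c ((sh x - sh x + (j : ZMod p)) ::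
            (m.map sh).map (fun y => y - sh x + (j : ZMod p)))
            = c ((x :: m).map (fun y => y - x + (j : ZMod p))) := by
          intro j
          simp [sh, Function.comp_def]
        simp only [e1]
        have e2 : c ((x :: m).map (fun y => y - x + (x.val : ZMod p))) = c (x :: m) := by
          simp
        have e3 : ∑ j ∈ range p, c ((x :: m).map (fun y => y - x + (j : ZMod p))) = 0 := by
          have := hN ((x :: m).map (fun y => y - x))
          simpa [Function.comp_def] using this
        have hx := ZMod.val_lt x
        by_cases hxp : x.val + 1 < p
        · have : (sh x).val = x.val + 1 := by
            unfold sh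
            have : x + 1 = ((x.val + 1 : ℕ) : ZMod p) := by simp
            rw [this, ZMod.val_natCast, Nat.mod_eq_of_lt hxp]
          rw [this, Finset.sum_range_succ, e2]
          simp
        · have hxp' : x.val + 1 = p := by omega
          have : sh x = 0 := by
            unfold sh
            have : x + 1 = ((x.val + 1 : ℕ) : ZMod p) := by simp
            rw [this, hxp']; simp
          rw [this]
          have hr : range p = range (x.val + 1) := by rw [hxp']
          rw [hr, Finset.sum_range_succ, e2] at e3
          simp only [List.map_cons] at e3
          simp only [ZMod.val_zero, Finset.range_zero, Finset.sum_empty]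
          linear_combination -e3
  · have hd' : Even (d + 1) := by simpa [Nat.even_add_one] using hd
    have hN : ∀ l : List (ZMod p), c (l.map sh) = c l := by
      intro l
      have := congrFun hM l
      simpa [Mop, hd, sub_eq_zero] using this
    have hNj : ∀ (j : ℕ) (l : List (ZMod p)), c (l.map sh^[j]) = c l := by
      intro j
      induction j with
      | zero => intro l; simp
      | succ j ih => intro l; rw [Function.iterate_succ, ← List.map_map, ih, hN]
    refine ⟨fun l => if l.head? = some 0 then c l else 0, ?_, ?_⟩
    · intro u a v
      simp [hc u a v]
    · funext l
      rcases l with _ | ⟨x, m⟩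
      · simp [Mop, hd', h0]
      · simp only [Mop, hd', if_true, hNj]
        simp only [List.map_cons, List.head?_cons, Option.some.injEq, sh_iter]
        rw [Finset.sum_eq_single_of_mem ((-x).val) (by simp [ZMod.val_lt])]
        · simp
        · intro j hj hjx
          rw [if_neg]
          intro h
          apply hjx
          have : (j : ZMod p) = -x := by linear_combination h
          rw [← this, ZMod.val_natCast, Nat.mod_eq_of_lt (by simpa using hj)]

end words

/-- alternating chain theorem -/
theorem exists_alt_chain {X : Type*} (p : ℕ) (hp : 2 ≤ p) (g : X → X) (hg : ∀ x, g^[p] x = x)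
    (e : ℕ → X) (push : ℕ → X → X) (N : ℕ)
    (le : X → X → Prop) (V : ℕ → X → Prop)
    (htrans : ∀ x y z, le x y → le y z → le x z)
    (hV0 : V 0 (e 0))
    (hVe : ∀ d, d + 1 < N → V (d + 1) (e (d + 1)))
    (hVp : ∀ d x, d + 1 < N → V d x → V (d + 1) (push (d + 1) x))
    (hVs : ∀ d x, d + 1 < N → V d x → V (d + 1) x)
    (hVg : ∀ d x, V d x → V d (g x))
    (hlg : ∀ x y, le x y → le (g x) (g y))
    (hlp : ∀ d x, d + 1 < N → V d x → le x (push (d + 1) x))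
    (hle : ∀ d x, d + 1 < N → V d x → le (e (d + 1)) (push (d + 1) x))
    (hpp : ∀ d x y, d + 1 < N → V d x → V d y → le x y → le (push (d + 1) x) (push (d + 1) y))
    (s : X → ZMod p) (hs : ∀ x, s (g x) = s x + 1) (d : ℕ) (hd : d < N) :
    ∃ l : List X, l.length = d + 1 ∧ l.Pairwise le ∧ (l.map s).IsChain (· ≠ ·) := by
  have : NeZero p := ⟨by omega⟩
  have : Fact (1 < p) := ⟨by omega⟩
  have key : ∀ d, ∃ c : List (ZMod p) → ZMod p, Norm c ∧ c [] = 0 ∧ (∀ l, del l c = 0) ∧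
      Mop p sh d c = (fun _ => 0) ∧ Xf p g e push d (fun l => c (l.map s)) = 1 := by
    intro d
    induction d with
    | zero =>
      refine ⟨fun l => del l (fun m => if m = [] then 1 else 0), ?_, rfl, fun l => del_del _ _,
        ?_, ?_⟩
      · apply Norm.del
        intro u a v
        simp
      · rw [Mop_del]
        have : Mop p sh 0 (fun m : List (ZMod p) => if m = [] then (1 : ZMod p) else 0)
            = fun _ => 0 := by
          funext l
          simp [Mop]
        rw [this]
        funext l
        exact del_zero l
      · simp [Xf, del]
    | succ d ih =>
      obtain ⟨c, hc, hc0, hcd, hcM, hcX⟩ := ih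
      obtain ⟨b, hb, hbM⟩ := exact_step d c hc hc0 hcM
      refine ⟨fun l => del l b, hb.del, rfl, fun l => del_del _ _, ?_, ?_⟩
      · rw [Mop_del, hbM]
        funext l
        exact hcd l
      · simp only [del_map]
        rw [Xf_del p g hg, Mop_map p g sh s hs, hbM, hcX]
  obtain ⟨c, hc, -, -, -, hcX⟩ := key d
  by_contra hcon
  push Not at hcon
  have := Xf_local p g e push N le V htrans hV0 hVe hVp hVs hVg hlg hlp hle hpp d hd
    (fun l => c (l.map s)) (by
      intro l hl _ hP
      have h := hcon l hl hP
      rw [List.isChain_iff_forall_rel_of_append_cons_cons] at h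
      push Not at h
      obtain ⟨a, b, l1, l2, hl, hab⟩ := h
      subst hab
      rw [hl]
      exact hc _ _ _)
  rw [hcX] at this
  exact one_ne_zero this

end KH

namespace KH

/-- nonzero sign vectors -/
def PP (n p : ℕ) := {A : Fin n → Option (ZMod p) // ∃ i, A i ≠ none}

/-- order -/
def PP.le {n p : ℕ} (A B : PP n p) : Prop := ∀ i x, A.1 i = some x → B.1 i = some x

/-- rotation -/
def PP.g {n p : ℕ} (A : PP n p) : PP n p :=
  ⟨fun i => (A.1 i).map (· + 1), by
    obtain ⟨i, hi⟩ := A.2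
    exact ⟨i, by simpa using hi⟩⟩

theorem PP.g_iter {n p : ℕ} (j : ℕ) (A : PP n p) (i : Fin n) :
    (PP.g^[j] A).1 i = (A.1 i).map (· + (j : ZMod p)) := by
  induction j with
  | zero => simp
  | succ j ih =>
    rw [Function.iterate_succ_apply']
    change ((PP.g^[j] A).1 i).map (· + 1) = _
    rw [ih]
    cases A.1 i <;> simp [add_assoc]

theorem tucker (n p : ℕ) (hn : 1 ≤ n) (hp : 2 ≤ p) (s : PP n p → ZMod p)
    (hs : ∀ A, s A.g = s A + 1) :
    ∃ l : List (PP n p), l.length = n ∧ l.Pairwise PP.le ∧ (l.map s).IsChain (· ≠ ·) := by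
  have hn0 : NeZero n := ⟨by omega⟩
  have key := exists_alt_chain (X := PP n p) p hp PP.g
    (by
      intro A
      apply Subtype.ext
      funext i
      rw [PP.g_iter]
      cases A.1 i <;> simp)
    (fun d => ⟨fun i => if i = Fin.ofNat n d then some 0 else none, ⟨Fin.ofNat n d, by simp⟩⟩)
    (fun d A => ⟨fun i => if i = Fin.ofNat n d then some 0 else A.1 i, ⟨Fin.ofNat n d, by simp⟩⟩)
    n PP.le (fun d A => ∀ i, A.1 i ≠ none → i.val ≤ d)
    (fun x y z h1 h2 i a h => h2 i a (h1 i a h))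
    (by intro i; simp)
    (by intro d hd i; simp; rintro rfl; simp [Nat.mod_eq_of_lt hd])
    (by
      intro d A hd hA i
      by_cases h : i = Fin.ofNat n (d + 1)
      · intro _; rw [h]; simp [Nat.mod_eq_of_lt hd]
      · simp only [h, if_false]
        intro h2
        have := hA i h2
        omega)
    (by
      intro d A hd hA i h
      have := hA i h
      omega)
    (by
      intro d A hA i h
      apply hA i
      intro h2
      apply h
      simp [PP.g, h2])
    (by
      intro A B h i x hx
      simp only [PP.g, Option.map_eq_some_iff] at hx ⊢
      obtain ⟨a, ha, rfl⟩ := hx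
      exact ⟨a, h i a ha, rfl⟩)
    (by
      intro d A hd hA i x hx
      have := hA i (by simp [hx])
      have hne : i ≠ Fin.ofNat n (d + 1) := by
        rintro rfl
        simp [Nat.mod_eq_of_lt hd] at this
      simp only [if_neg hne]
      exact hx)
    (by
      intro d A hd hA i x hx
      simp only at hx ⊢
      split_ifs at hx ⊢ with h
      exact hx)
    (by
      intro d A B hd hA hB h i x hx
      simp only at hx ⊢
      split_ifs at hx ⊢ with h1
      · exact hx
      · exact h i x hx)
    s hs (n - 1) (by omega)
  obtain ⟨l, hl, h⟩ := key
  exact ⟨l, by omega, h⟩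

/-- sign of a family of subsets -/
noncomputable def tau {p : ℕ} (S : ℕ → Finset (ZMod p)) : ZMod p :=
  (∑ x ∈ S (sInf {j | (S j).Nonempty}), x) * ((#(S (sInf {j | (S j).Nonempty})) : ZMod p))⁻¹

theorem tau_shift {p : ℕ} [Fact p.Prime] (S S' : ℕ → Finset (ZMod p))
    (h : ∀ j, S' j = (S j).image (· + 1)) (hpr : ∀ j, S j ≠ univ) (hne : ∃ j, (S j).Nonempty) :
    tau S' = tau S + 1 := by
  have h1 : {j | (S' j).Nonempty} = {j | (S j).Nonempty} := by
    ext j; simp only [Set.mem_ofPred_eq, h, Finset.image_nonempty]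
  unfold tau
  rw [h1]
  have h2 : (S (sInf {j | (S j).Nonempty})).Nonempty := Nat.sInf_mem hne
  generalize sInf {j | (S j).Nonempty} = j0 at *
  have hinj : Function.Injective (fun x : ZMod p => x + 1) := add_left_injective 1
  rw [h, Finset.card_image_of_injective _ hinj, Finset.sum_image (fun a _ b _ hab => hinj hab),
    Finset.sum_add_distrib]
  have hlt : #(S j0) < p := by
    have := (Finset.card_lt_iff_ne_univ (S j0)).2 (hpr j0)
    rwa [ZMod.card] at this
  have hc : (#(S j0) : ZMod p) ≠ 0 := by
    rw [Ne, ZMod.natCast_eq_zero_iff]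
    intro hd
    have := Nat.le_of_dvd h2.card_pos hd
    omega
  simp only [sum_const, nsmul_eq_mul, mul_one]
  field_simp

theorem core (p : ℕ) [Fact p.Prime] (n t M w : ℕ) (hn : 1 ≤ n) (hw' : w ≤ (p - 1) * t + 1)
    (hw : 1 ≤ w) (α : PP n p → ℕ) (σ : PP n p → ZMod p) (S : PP n p → ℕ → Finset (ZMod p))
    (α1 : ∀ A, 1 ≤ α A) (αg : ∀ A, α A.g = α A)
    (αmono : ∀ A B, A.le B → α A ≤ α B)
    (σg : ∀ A, σ A.g = σ A + 1)
    (σeq : ∀ A B, A.le B → α A = α B → σ A = σ B)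
    (Sg : ∀ A j, S A.g j = (S A j).image (· + 1))
    (Smono : ∀ A B j, A.le B → S A j ⊆ S B j)
    (Sproper : ∀ A j, S A j ≠ univ)
    (Sbig : ∀ A, M < α A → w ≤ ∑ j ∈ Icc 1 t, #(S A j))
    (Ssupp : ∀ A j, j ∉ Icc 1 t → S A j = ∅) :
    n + w ≤ M + (p - 1) * t + 1 := by
  have hp2 : 2 ≤ p := (Fact.out : p.Prime).two_le
  have hne : ∀ A, M < α A → ∃ j, (S A j).Nonempty := by
    intro A hA
    by_contra hcon
    push Not at hcon
    have := Sbig A hA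
    simp [hcon] at this
    omega
  have hub : ∀ A, ∑ j ∈ Icc 1 t, #(S A j) ≤ (p - 1) * t := by
    intro A
    calc ∑ j ∈ Icc 1 t, #(S A j) ≤ ∑ j ∈ Icc 1 t, (p - 1) := by
          apply Finset.sum_le_sum
          intro j _
          have := (Finset.card_lt_iff_ne_univ (S A j)).2 (Sproper A j)
          rw [ZMod.card] at this
          omega
      _ = (p - 1) * t := by simp [mul_comm]
  let s : PP n p → ZMod p := fun A => if α A ≤ M then σ A else tau (S A)
  let ρ : PP n p → ℕ := fun A => if α A ≤ M then α A else M + (∑ j ∈ Icc 1 t, #(S A j)) + 1 - w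
  have hs : ∀ A, s A.g = s A + 1 := by
    intro A
    simp only [s, αg]
    split_ifs with h
    · exact σg A
    · exact tau_shift _ _ (Sg A) (Sproper A) (hne A (by omega))
  have hρ : ∀ A B, A.le B → s A ≠ s B → ρ A < ρ B := by
    intro A B hAB hsn
    have hm := αmono A B hAB
    simp only [s, ρ] at hsn ⊢
    by_cases hB : α B ≤ M
    · have hA : α A ≤ M := by omega
      rw [if_pos hA, if_pos hB] at hsn ⊢
      rcases lt_or_eq_of_le hm with h | h
      · exact h
      · exact absurd (σeq A B hAB h) hsn
    · have hb := Sbig B (by omega)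
      rw [if_neg hB] at hsn ⊢
      by_cases hA : α A ≤ M
      · rw [if_pos hA]; omega
      · rw [if_neg hA] at hsn ⊢
        have ha := Sbig A (by omega)
        have hlt : ∑ j ∈ Icc 1 t, #(S A j) < ∑ j ∈ Icc 1 t, #(S B j) := by
          by_contra hcon
          apply hsn
          congr 1
          funext j
          have hle : ∀ j ∈ Icc 1 t, #(S A j) ≤ #(S B j) :=
            fun j _ => Finset.card_le_card (Smono A B j hAB)
          have heq := (Finset.sum_eq_sum_iff_of_le hle).1
            (le_antisymm (Finset.sum_le_sum hle) (by omega))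
          by_cases hj : j ∈ Icc 1 t
          · exact Finset.eq_of_subset_of_card_le (Smono A B j hAB) (heq j hj).ge
          · rw [Ssupp A j hj, Ssupp B j hj]
        omega
  have hρr : ∀ A, ρ A ∈ Icc 1 (M + (p - 1) * t + 1 - w) := by
    intro A
    simp only [ρ, Finset.mem_Icc]
    have h1 := α1 A
    have h2 := hub A
    have h3 := Sbig A
    split_ifs with h
    · omega
    · have := h3 (by omega); omega
  obtain ⟨l, hl, hP, hC⟩ := tucker n p hn hp2 s hs
  rw [List.isChain_map] at hC
  have hC2 : (l.map ρ).IsChain (· < ·) := by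
    rw [List.isChain_map]
    have := hP.isChain
    rw [List.isChain_iff_forall_rel_of_append_cons_cons] at this hC ⊢
    intro a b l1 l2 h
    exact hρ a b (this h) (hC h)
  have hnd : (l.map ρ).Nodup := (List.isChain_iff_pairwise.1 hC2).imp (fun h => ne_of_lt h)
  have hcard : (l.map ρ).toFinset.card ≤ (Icc 1 (M + (p - 1) * t + 1 - w)).card := by
    apply Finset.card_le_card
    intro x hx
    simp only [List.mem_toFinset, List.mem_map] at hx
    obtain ⟨A, _, rfl⟩ := hx
    exact hρr A
  rw [List.toFinset_card_of_nodup hnd] at hcard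
  simp [hl] at hcard
  omega

end KH

namespace KH

/-- The lower bound: with `n` large, each coloring of stable sets has a monochromatic edge. -/
def Good (s r : ℕ) : Prop :=
  ∀ n k t : ℕ, 1 ≤ k → 1 ≤ t → (r - 1) * t + r * (k - 1) + 1 ≤ n →
    ∀ c : Finset (Fin n) → ℕ, (∀ A ∈ stableSets n s k, c A ∈ Icc 1 t) →
      ∃ f : Fin r → Finset (Fin n), (∀ i, f i ∈ stableSets n s k) ∧
        (∀ i j, i ≠ j → Disjoint (f i) (f j)) ∧ ∃ x, ∀ i, c (f i) = x

theorem mem_stableSets {n s k : ℕ} {A : Finset (Fin n)} :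
    A ∈ stableSets n s k ↔ A.card = k ∧ Stable n s A := by
  simp [stableSets]

theorem PP.g_val {n p : ℕ} (A : PP n p) (i : Fin n) : A.g.1 i = (A.1 i).map (· + 1) := rfl

theorem zmod_two_aux : ∀ x y z : ZMod 2, ¬ x + z = y → y = x + (z + 1) := by decide

theorem zmod_two_zero : (2 : ZMod 2) = 0 := by decide

/-- support list -/
def PP.L {n p : ℕ} (A : PP n p) : List (Fin n) :=
  (List.finRange n).filter (fun i => (A.1 i).isSome)

theorem PP.mem_L {n p : ℕ} (A : PP n p) (i : Fin n) : i ∈ A.L ↔ ∃ x, A.1 i = some x := by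
  simp [PP.L, Option.isSome_iff_exists]

theorem PP.L_ne {n p : ℕ} (A : PP n p) : A.L ≠ [] := by
  obtain ⟨i, hi⟩ := A.2
  intro h
  have : i ∈ A.L := by
    rw [A.mem_L]; exact Option.ne_none_iff_exists'.1 hi
  rw [h] at this
  simp at this

theorem PP.L_g {n p : ℕ} (A : PP n p) : A.g.L = A.L := by
  simp [PP.L, PP.g]

theorem PP.L_sub {n p : ℕ} (A B : PP n p) (h : A.le B) : A.L.Sublist B.L := by
  apply List.monotone_filter_right
  intro i hi
  obtain ⟨x, hx⟩ := Option.isSome_iff_exists.1 hi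
  simp [h i x hx]

theorem PP.L_sorted {n p : ℕ} (A : PP n p) : A.L.Pairwise (· < ·) :=
  (List.pairwise_lt_finRange n).filter _

/-- first sign -/
def PP.sg {n p : ℕ} (A : PP n p) : ZMod p := (A.1 (A.L.head A.L_ne)).getD 0

theorem PP.sg_spec {n p : ℕ} (A : PP n p) : A.1 (A.L.head A.L_ne) = some A.sg := by
  obtain ⟨x, hx⟩ := (A.mem_L _).1 (List.head_mem A.L_ne)
  unfold PP.sg
  rw [hx]; rfl

theorem PP.sg_g {n p : ℕ} (A : PP n p) : A.g.sg = A.sg + 1 := by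
  have h1 := A.g.sg_spec
  have h2 := A.sg_spec
  simp only [PP.L_g] at h1
  change (A.1 _).map _ = _ at h1
  rw [h2] at h1
  simpa using h1.symm

open Classical in
/-- signs carrying a color -/
noncomputable def sgn {n p : ℕ} [NeZero p] (s k : ℕ) (c : Finset (Fin n) → ℕ) (A : PP n p) (j : ℕ) :
    Finset (ZMod p) :=
  univ.filter fun x => ∃ F ∈ stableSets n s k, c F = j ∧ ∀ i ∈ F, A.1 i = some x

theorem mem_sgn {n p : ℕ} [NeZero p] (s k : ℕ) (c : Finset (Fin n) → ℕ) (A : PP n p) (j : ℕ)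
    (x : ZMod p) :
    x ∈ sgn s k c A j ↔ ∃ F ∈ stableSets n s k, c F = j ∧ ∀ i ∈ F, A.1 i = some x := by
  simp [sgn]

theorem good_of (p : ℕ) [Fact p.Prime] (s n k t M w : ℕ) (hk : 1 ≤ k) (hn : 1 ≤ n)
    (hw' : w ≤ (p - 1) * t + 1) (hw : 1 ≤ w) (hnM : M + (p - 1) * t + 1 < n + w)
    (c : Finset (Fin n) → ℕ) (hc : ∀ A ∈ stableSets n s k, c A ∈ Icc 1 t)
    (α : PP n p → ℕ)
    (α1 : ∀ A, 1 ≤ α A) (αg : ∀ A, α A.g = α A)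
    (αmono : ∀ A B, A.le B → α A ≤ α B)
    (σeq : ∀ A B, A.le B → α A = α B → A.sg = B.sg)
    (hbig : ∀ A, M < α A → w ≤ ∑ j ∈ Icc 1 t, #(sgn s k c A j)) :
    ∃ f : Fin p → Finset (Fin n), (∀ i, f i ∈ stableSets n s k) ∧
        (∀ i j, i ≠ j → Disjoint (f i) (f j)) ∧ ∃ x, ∀ i, c (f i) = x := by
  by_contra hcon
  have hpr : ∀ (A : PP n p) j, sgn s k c A j ≠ univ := by
    intro A j hu
    apply hcon
    have : ∀ x : ZMod p, ∃ F ∈ stableSets n s k, c F = j ∧ ∀ i ∈ F, A.1 i = some x := by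
      intro x
      rw [← mem_sgn, hu]; simp
    choose F h1 h2 h3 using this
    have eqv : Fin p ≃ ZMod p := (Fintype.equivFinOfCardEq (ZMod.card p)).symm
    refine ⟨fun i => F (eqv i), fun i => h1 _, ?_, j, fun i => h2 _⟩
    intro a b hab
    rw [Finset.disjoint_left]
    intro i hi hi'
    apply hab
    apply eqv.injective
    have e1 := h3 _ i hi
    rw [h3 _ i hi'] at e1
    simpa using e1.symm
  have := core p n t M w hn hw' hw α PP.sg (sgn s k c) α1 αg αmono PP.sg_g σeq
    (by
      intro A j
      ext x
      simp only [Finset.mem_image, mem_sgn, PP.g_val, Option.map_eq_some_iff]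
      constructor
      · rintro ⟨F, hF, hcF, h⟩
        refine ⟨x - 1, ⟨F, hF, hcF, ?_⟩, by ring⟩
        intro i hi
        obtain ⟨a, ha, rfl⟩ := h i hi
        rw [ha]; simp
      · rintro ⟨y, ⟨F, hF, hcF, h⟩, rfl⟩
        exact ⟨F, hF, hcF, fun i hi => ⟨y, h i hi, rfl⟩⟩)
    (by
      intro A B j hAB x
      simp only [mem_sgn]
      rintro ⟨F, hF, hcF, h⟩
      exact ⟨F, hF, hcF, fun i hi => hAB _ _ (h i hi)⟩)
    hpr hbig
    (by
      intro A j hj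
      ext x
      simp only [mem_sgn, Finset.notMem_empty, iff_false]
      rintro ⟨F, hF, hcF, h⟩
      exact hj (hcF ▸ hc F hF))
  omega

theorem good_prime (p : ℕ) [Fact p.Prime] : Good 1 p := by
  intro n k t hk ht hn c hc
  have hp2 : 2 ≤ p := (Fact.out : p.Prime).two_le
  refine good_of p 1 n k t (p * (k - 1)) 1 hk (by omega) (by omega) le_rfl (by omega) c hc
    (fun A => A.L.length) ?_ ?_ ?_ ?_ ?_
  · intro A
    exact List.length_pos_iff.2 A.L_ne
  · intro A; simp only [PP.L_g]
  · intro A B h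
    exact (PP.L_sub A B h).length_le
  · intro A B h hl
    have := (PP.L_sub A B h).eq_of_length hl
    have h1 := h _ _ A.sg_spec
    have h2 := B.sg_spec
    simp only [this] at h1
    rw [h1] at h2
    simpa using h2
  · intro A hA
    have hex : ∃ x : ZMod p, k ≤ #{i : Fin n | A.1 i = some x} := by
      by_contra hcon
      push Not at hcon
      have hs : A.L.toFinset ⊆ (univ : Finset (ZMod p)).biUnion
          (fun x => ({i : Fin n | A.1 i = some x} : Finset (Fin n))) := by
        intro i hi
        rw [List.mem_toFinset, A.mem_L] at hi
        simpa using hi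
      have h1 := Finset.card_le_card hs
      rw [List.toFinset_card_of_nodup (A.L_sorted.imp (fun h => ne_of_lt h))] at h1
      have h2 := Finset.card_biUnion_le (s := (univ : Finset (ZMod p)))
        (t := fun x => ({i : Fin n | A.1 i = some x} : Finset (Fin n)))
      have h3 : ∑ x : ZMod p, #{i : Fin n | A.1 i = some x} ≤ ∑ x : ZMod p, (k - 1) := by
        apply Finset.sum_le_sum
        intro x _
        have := hcon x
        omega
      simp only [sum_const, card_univ, ZMod.card, smul_eq_mul] at h3
      omega
    obtain ⟨x, hx⟩ := hex
    obtain ⟨F, hF, hFk⟩ := Finset.exists_subset_card_eq hx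
    have hFs : F ∈ stableSets n 1 k := by
      rw [mem_stableSets]
      refine ⟨hFk, ?_⟩
      intro i hi j hj hij
      have : i.val ≠ j.val := fun h => hij (Fin.ext h)
      omega
    have hmem : x ∈ sgn 1 k c A (c F) := by
      rw [mem_sgn]
      refine ⟨F, hFs, rfl, ?_⟩
      intro i hi
      simpa using hF hi
    calc 1 ≤ #(sgn 1 k c A (c F)) := Finset.card_pos.2 ⟨x, hmem⟩
      _ ≤ _ := Finset.single_le_sum (f := fun j => #(sgn 1 k c A j)) (fun _ _ => Nat.zero_le _)
            (hc F hFs)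

theorem gap {m n s : ℕ} (f : Fin m → Fin n) (h : ∀ i j : Fin m, i < j → (f i).val + s ≤ f j)
    (i d : ℕ) (hd : i + d < m) : (f ⟨i, by omega⟩).val + s * d ≤ f ⟨i + d, hd⟩ := by
  induction d with
  | zero => simp
  | succ d ih =>
    have h1 := ih (by omega)
    have h2 := h ⟨i + d, by omega⟩ ⟨i + (d + 1), hd⟩ (by simp [Fin.lt_def])
    rw [Nat.mul_succ]
    omega

/-- relation of different sign -/
def PP.R {n p : ℕ} (A : PP n p) (i j : Fin n) : Prop := A.1 i ≠ A.1 j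

instance {n p : ℕ} (A : PP n p) : DecidableRel A.R := fun i j => by unfold PP.R; infer_instance

instance {n p : ℕ} (A : PP n p) : IsEquiv (Fin n) A.Rᶜ where
  refl a := by simp [PP.R]
  symm a b h := by simp [PP.R] at h ⊢; exact h.symm
  trans a b c h h' := by simp [PP.R] at h h' ⊢; exact h.trans h'

/-- alternation number -/
def PP.alt {n p : ℕ} (A : PP n p) : ℕ := (A.L.destutter A.R).length

theorem isChain_mem {X : Type*} {R R' : X → X → Prop} {l : List X} (h : l.IsChain R)
    (hR : ∀ a ∈ l, ∀ b ∈ l, R a b → R' a b) : l.IsChain R' := by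
  rw [List.isChain_iff_forall_rel_of_append_cons_cons] at h ⊢
  intro a b l1 l2 hl
  exact hR a (by simp [hl]) b (by simp [hl]) (h hl)

theorem PP.R_le {n p : ℕ} (A B : PP n p) (h : A.le B) (a : Fin n) (ha : a ∈ A.L) (b : Fin n)
    (hb : b ∈ A.L) (hab : A.R a b) : B.R a b := by
  obtain ⟨x, hx⟩ := (A.mem_L _).1 ha
  obtain ⟨y, hy⟩ := (A.mem_L _).1 hb
  unfold PP.R at hab ⊢
  rwa [h a x hx, h b y hy, ← hx, ← hy]

theorem PP.alt_mono {n p : ℕ} (A B : PP n p) (h : A.le B) : A.alt ≤ B.alt := by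
  have hsub := List.destutter_sublist A.R A.L
  apply List.IsChain.length_le_length_destutter (hsub.trans (PP.L_sub A B h))
  exact isChain_mem (List.isChain_destutter _ _)
    (fun a ha b hb => PP.R_le A B h a (hsub.subset ha) b (hsub.subset hb))

theorem PP.alt_g {n p : ℕ} (A : PP n p) : A.g.alt = A.alt := by
  have : A.g.R = A.R := by
    funext i j
    unfold PP.R PP.g
    have : Function.Injective (Option.map (fun x : ZMod p => x + 1)) :=
      Option.map_injective (add_left_injective 1)
    simp only [ne_eq, this.eq_iff]
  unfold PP.alt
  rw [PP.L_g]
  congr 1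
  congr 1

theorem PP.alt_sg {n p : ℕ} (A B : PP n p) (h : A.le B) (hal : A.alt = B.alt) : A.sg = B.sg := by
  by_contra hne
  have hsub := PP.L_sub A B h
  have hA := A.sg_spec
  have hB := B.sg_spec
  rcases hLA : A.L with _ | ⟨a, la⟩
  · exact A.L_ne hLA
  rcases hLB : B.L with _ | ⟨b, lb⟩
  · exact B.L_ne hLB
  simp only [hLA, List.head_cons] at hA
  simp only [hLB, List.head_cons] at hB
  have hBa := h _ _ hA
  have hab : B.R b a := by
    unfold PP.R
    rw [hB, hBa]
    simpa using fun h => hne h.symm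
  have hab' : a ≠ b := by
    rintro rfl
    exact hab rfl
  have hsub2 : A.L.Sublist lb := by
    rw [hLA, hLB] at hsub
    rw [hLA]
    exact hsub.of_cons_of_ne hab'
  have hds : (A.L.destutter A.R).Sublist A.L := List.destutter_sublist A.R A.L
  have hch : (A.L.destutter A.R).IsChain B.R := isChain_mem (List.isChain_destutter _ _)
    (fun a ha b hb => PP.R_le A B h a (hds.subset ha) b (hds.subset hb))
  obtain ⟨m, hm⟩ : ∃ m, A.L.destutter A.R = a :: m := by
    rw [hLA, List.destutter_cons']
    have : ∀ (l : List (Fin n)), ∃ m, List.destutter' A.R a l = a :: m := by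
      intro l
      induction l with
      | nil => exact ⟨[], rfl⟩
      | cons x l ih =>
        rw [List.destutter'_cons]
        split_ifs
        · exact ⟨_, rfl⟩
        · exact ih
    exact this la
  have hch2 : (b :: A.L.destutter A.R).IsChain B.R := by
    rw [hm] at hch ⊢
    exact List.isChain_cons_cons.2 ⟨hab, hch⟩
  have hfin : (b :: A.L.destutter A.R).Sublist B.L := by
    rw [hLB]
    exact (hds.trans hsub2).cons_cons b
  have := List.IsChain.length_le_length_destutter hfin hch2
  unfold PP.alt at hal
  simp at this
  omega

theorem good_two : Good 2 2 := by
  intro n k t hk ht hn c hc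
  have : Fact (Nat.Prime 2) := ⟨Nat.prime_two⟩
  refine good_of 2 2 n k t (2 * k - 1) 2 hk (by omega) (by omega) (by omega) (by omega) c hc
    PP.alt ?_ PP.alt_g PP.alt_mono PP.alt_sg ?_
  · intro A
    unfold PP.alt
    apply List.length_pos_iff.2
    rw [Ne, List.destutter_eq_nil]
    exact A.L_ne
  · intro A hA
    have hlen : 2 * k ≤ (A.L.destutter A.R).length := by
      unfold PP.alt at hA
      omega
    have hsub : (A.L.destutter A.R).Sublist A.L := List.destutter_sublist A.R A.L
    have hsort : (A.L.destutter A.R).Pairwise (· < ·) := A.L_sorted.sublist hsub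
    have hchain : (A.L.destutter A.R).IsChain A.R := List.isChain_destutter _ _
    have hmem : ∀ x ∈ A.L.destutter A.R, x ∈ A.L := fun x hx => hsub.subset hx
    generalize A.L.destutter A.R = q at *
    let f : Fin (2 * k) → Fin n := fun i => q[i.val]'(by omega)
    have hf : ∀ i j : Fin (2 * k), i < j → (f i).val + 1 ≤ f j := by
      intro i j hij
      exact List.pairwise_iff_getElem.1 hsort i.val j.val _ _ hij
    have hgap := gap f hf
    have hk0 : 0 < 2 * k := by omega
    have hval : ∀ i (hi : i < 2 * k), A.1 (f ⟨i, hi⟩) =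
        (A.1 (f ⟨0, hk0⟩)).map (· + (i : ZMod 2)) := by
      intro i
      induction i with
      | zero => intro hi; simp
      | succ i ih =>
        intro hi
        have h1 := ih (by omega)
        have h2 : A.R (f ⟨i, by omega⟩) (f ⟨i + 1, hi⟩) := hchain.getElem i (by omega)
        unfold PP.R at h2
        obtain ⟨x, hx⟩ := (A.mem_L _).1 (hmem (f ⟨0, hk0⟩) (List.getElem_mem _))
        obtain ⟨y, hy⟩ := (A.mem_L _).1 (hmem (f ⟨i + 1, hi⟩) (List.getElem_mem _))
        rw [h1, hx, hy] at h2
        rw [hx, hy]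
        simp only [Option.map_some, ne_eq, Option.some.injEq, Nat.cast_add, Nat.cast_one] at h2 ⊢
        generalize (i : ZMod 2) = z at h2 ⊢
        exact zmod_two_aux x y z h2
    obtain ⟨x, hx⟩ := (A.mem_L _).1 (hmem (f ⟨0, hk0⟩) (List.getElem_mem _))
    rw [hx] at hval
    let F : Fin 2 → Finset (Fin n) := fun b =>
      univ.image (fun i : Fin k => f ⟨2 * i.val + b.val, by omega⟩)
    have hFs : ∀ b, F b ∈ stableSets n 2 k := by
      intro b
      have hlt : ∀ i j : Fin k, i < j →
          (f ⟨2 * i.val + b.val, by omega⟩).val + 2 ≤ (f ⟨2 * j.val + b.val, by omega⟩).val ∧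
          (f ⟨2 * j.val + b.val, by omega⟩).val + 2 ≤ n + (f ⟨2 * i.val + b.val, by omega⟩).val := by
        intro i j hij
        have hij' : i.val < j.val := hij
        have g1 := hgap (2 * i.val + b.val) (2 * (j.val - i.val)) (by omega)
        have e1 : 2 * i.val + b.val + 2 * (j.val - i.val) = 2 * j.val + b.val := by omega
        simp only [e1] at g1
        have g2 := hgap 0 (2 * i.val + b.val) (by omega)
        simp only [Nat.zero_add] at g2
        have g3 := hgap (2 * j.val + b.val) (2 * k - 1 - (2 * j.val + b.val)) (by omega)
        have g4 := (f ⟨2 * j.val + b.val + (2 * k - 1 - (2 * j.val + b.val)), by omega⟩).isLt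
        omega
      rw [mem_stableSets]
      constructor
      · rw [Finset.card_image_of_injective]
        · simp
        · intro i j hij
          simp only at hij
          have hij2 := congrArg Fin.val hij
          rcases lt_trichotomy i j with h | h | h
          · have := hlt i j h; omega
          · exact h
          · have := hlt j i h; omega
      · intro a ha b' hb hab
        simp only [F, Finset.mem_image, Finset.mem_univ, true_and] at ha hb
        obtain ⟨i, rfl⟩ := ha
        obtain ⟨j, rfl⟩ := hb
        rcases lt_trichotomy i j with h | h | h
        · have := hlt i j h; omega
        · subst h; exact absurd rfl hab
        · have := hlt j i h; omega
    have hm : ∀ b : Fin 2, x + (b.val : ZMod 2) ∈ sgn 2 k c A (c (F b)) := by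
      intro b
      rw [mem_sgn]
      refine ⟨F b, hFs b, rfl, ?_⟩
      intro a ha
      simp only [F, Finset.mem_image, Finset.mem_univ, true_and] at ha
      obtain ⟨i, rfl⟩ := ha
      rw [hval]
      have : ((2 * i.val + b.val : ℕ) : ZMod 2) = b.val := by
        push_cast
        rw [zmod_two_zero]; ring
      rw [this]; rfl
    rw [← Finset.card_sigma]
    have hpair : ({⟨c (F 0), x + ((0 : Fin 2).val : ZMod 2)⟩, ⟨c (F 1), x + ((1 : Fin 2).val : ZMod 2)⟩} :
        Finset (Σ _ : ℕ, ZMod 2)) ⊆ (Icc 1 t).sigma (sgn 2 k c A) := by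
      intro y hy
      simp only [Finset.mem_insert, Finset.mem_singleton] at hy
      rcases hy with rfl | rfl
      · exact Finset.mem_sigma.2 ⟨hc _ (hFs 0), hm 0⟩
      · exact Finset.mem_sigma.2 ⟨hc _ (hFs 1), hm 1⟩
    have h2 := Finset.card_le_card hpair
    rw [Finset.card_pair] at h2
    · exact h2
    · intro h
      have := congrArg Sigma.snd h
      simp at this

theorem good_one : Good 1 1 := by
  intro n k t hk ht hn c hc
  obtain ⟨F, hF, hFk⟩ := Finset.exists_subset_card_eq (s := (univ : Finset (Fin n))) (n := k)
    (by simp; omega)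
  refine ⟨fun _ => F, ?_, ?_, c F, fun _ => rfl⟩
  · intro _
    rw [mem_stableSets]
    refine ⟨hFk, ?_⟩
    intro i hi j hj hij
    have : i.val ≠ j.val := fun h => hij (Fin.ext h)
    omega
  · intro i j hij
    exact absurd (Subsingleton.elim i j) hij

theorem stable_comp {n n₁ s₁ s₂ : ℕ} (f : Fin n₁ → Fin n) (hf : StrictMono f)
    (hst : Stable n s₁ (univ.image f)) (B : Finset (Fin n₁)) (hB : Stable n₁ s₂ B) :
    Stable n (s₁ * s₂) (B.image f) := by
  have hlt : ∀ i j : Fin n₁, i < j → (f i).val + s₁ ≤ f j ∧ (f j).val + s₁ ≤ n + f i := by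
    intro i j hij
    have h1 : (f i).val < f j := hf hij
    have := hst (f i) (by simp) (f j) (by simp) (hf hij).ne
    omega
  have hgap := gap f (fun i j h => (hlt i j h).1)
  have main : ∀ i ∈ B, ∀ j ∈ B, i < j →
      (f i).val + s₁ * s₂ ≤ f j ∧ (f j).val + s₁ * s₂ ≤ n + f i := by
    intro i hi j hj hij
    have hij' : i.val < j.val := hij
    have hb := hB i hi j hj hij.ne
    have g1 := hgap i.val (j.val - i.val) (by omega)
    have e1 : i.val + (j.val - i.val) = j.val := by omega
    simp only [e1, Fin.eta] at g1
    have m1 : s₁ * s₂ ≤ s₁ * (j.val - i.val) := Nat.mul_le_mul_left _ (by omega)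
    refine ⟨by omega, ?_⟩
    have g2 := hgap 0 i.val (by omega)
    simp only [Nat.zero_add, Fin.eta] at g2
    have g3 := hgap j.val (n₁ - 1 - j.val) (by omega)
    have e3 : j.val + (n₁ - 1 - j.val) = n₁ - 1 := by omega
    simp only [e3, Fin.eta] at g3
    have g4 := (hlt ⟨0, by omega⟩ ⟨n₁ - 1, by omega⟩ (by simp [Fin.lt_def]; omega)).2
    have m2 : s₁ * s₂ ≤ s₁ * (i.val + (n₁ - 1 - j.val) + 1) := Nat.mul_le_mul_left _ (by omega)
    rw [Nat.mul_add, Nat.mul_add] at m2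
    omega
  intro a ha b hb hab
  simp only [Finset.mem_image] at ha hb
  obtain ⟨i, hi, rfl⟩ := ha
  obtain ⟨j, hj, rfl⟩ := hb
  rcases lt_trichotomy i j with h | h | h
  · have := main i hi j hj h; omega
  · subst h; exact absurd rfl hab
  · have := main j hj i hi h; omega

theorem good_mul {s₁ r₁ s₂ r₂ : ℕ} (hr₁ : 1 ≤ r₁) (hr₂ : 1 ≤ r₂) (h₁ : Good s₁ r₁)
    (h₂ : Good s₂ r₂) : Good (s₁ * s₂) (r₁ * r₂) := by
  intro n k t hk ht hn c hc
  obtain ⟨n₁, hn₁⟩ : ∃ n₁, n₁ = (r₂ - 1) * t + r₂ * (k - 1) + 1 := ⟨_, rfl⟩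
  have hin : ∀ A : Finset (Fin n), A ∈ stableSets n s₁ n₁ →
      ∃ x, x ∈ Icc 1 t ∧ ∃ f : Fin r₂ → Finset (Fin n), (∀ i, f i ⊆ A) ∧
        (∀ i, f i ∈ stableSets n (s₁ * s₂) k) ∧ (∀ i j, i ≠ j → Disjoint (f i) (f j)) ∧
        ∀ i, c (f i) = x := by
    intro A hA
    rw [mem_stableSets] at hA
    obtain ⟨hAc, hAs⟩ := hA
    let e := A.orderEmbOfFin hAc
    have himg : univ.image e = A := by
      exact Finset.image_orderEmbOfFin_univ A hAc
    have hst : ∀ B ∈ stableSets n₁ s₂ k, B.image e ∈ stableSets n (s₁ * s₂) k := by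
      intro B hB
      rw [mem_stableSets] at hB ⊢
      refine ⟨?_, stable_comp e e.strictMono (by rwa [himg]) B hB.2⟩
      rw [Finset.card_image_of_injective _ e.injective, hB.1]
    obtain ⟨f, hf1, hf2, x, hx⟩ := h₂ n₁ k t hk ht hn₁.ge (fun B => c (B.image e))
      (fun B hB => hc _ (hst B hB))
    refine ⟨x, ?_, fun i => (f i).image e, ?_, fun i => hst _ (hf1 i), ?_, hx⟩
    · rw [← hx ⟨0, by omega⟩]
      exact hc _ (hst _ (hf1 _))
    · intro i
      rw [← himg]
      exact Finset.image_subset_image (Finset.subset_univ _)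
    · intro i j hij
      exact (Finset.disjoint_image e.injective).2 (hf2 i j hij)
  classical
  let c' : Finset (Fin n) → ℕ := fun A =>
    if h : A ∈ stableSets n s₁ n₁ then (hin A h).choose else 0
  have hc' : ∀ A (h : A ∈ stableSets n s₁ n₁), c' A = (hin A h).choose := by
    intro A h
    simp only [c', dif_pos h]
  have hbd : (r₁ - 1) * t + r₁ * (n₁ - 1) + 1 ≤ n := by
    obtain ⟨q₁, rfl⟩ := Nat.exists_eq_add_of_le hr₁
    obtain ⟨q₂, rfl⟩ := Nat.exists_eq_add_of_le hr₂
    have e1 : n₁ - 1 = q₂ * t + (1 + q₂) * (k - 1) := by rw [hn₁]; simp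
    have e2 : (1 + q₁) * (1 + q₂) - 1 = q₁ + (1 + q₁) * q₂ := by
      have : (1 + q₁) * (1 + q₂) = q₁ + (1 + q₁) * q₂ + 1 := by ring
      omega
    rw [e1]
    rw [e2] at hn
    simp only [Nat.add_sub_cancel_left]
    refine le_trans (le_of_eq ?_) hn
    ring
  obtain ⟨f, hf1, hf2, x, hx⟩ := h₁ n n₁ t (by omega) ht hbd c' (by
    intro A hA
    rw [hc' A hA]
    exact (hin A hA).choose_spec.1)
  have hsp : ∀ i, ∃ F : Fin r₂ → Finset (Fin n), (∀ j, F j ⊆ f i) ∧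
        (∀ j, F j ∈ stableSets n (s₁ * s₂) k) ∧ (∀ j l, j ≠ l → Disjoint (F j) (F l)) ∧
        ∀ j, c (F j) = x := by
    intro i
    have h := (hin (f i) (hf1 i)).choose_spec.2
    rw [← hc' (f i) (hf1 i), hx] at h
    exact h
  choose F hF1 hF2 hF3 hF4 using hsp
  refine ⟨fun y => F (finProdFinEquiv.symm y).1 (finProdFinEquiv.symm y).2, fun y => hF2 _ _, ?_,
    x, fun y => hF4 _ _⟩
  intro y z hyz
  change Disjoint (F (finProdFinEquiv.symm y).1 (finProdFinEquiv.symm y).2)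
    (F (finProdFinEquiv.symm z).1 (finProdFinEquiv.symm z).2)
  have hne : finProdFinEquiv.symm y ≠ finProdFinEquiv.symm z :=
    fun h => hyz (finProdFinEquiv.symm.injective h)
  generalize finProdFinEquiv.symm y = y at *
  generalize finProdFinEquiv.symm z = z at *
  by_cases h : y.1 = z.1
  · have h2 : y.2 ≠ z.2 := fun h2 => hne (Prod.ext h h2)
    rw [h]
    exact hF3 _ _ _ h2
  · exact Finset.disjoint_of_subset_left (hF1 _ _)
      (Finset.disjoint_of_subset_right (hF1 _ _) (hf2 _ _ h))

theorem good_all (m : ℕ) (hm : 1 ≤ m) : Good 1 m := by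
  induction m using Nat.recOnMul with
  | zero => omega
  | one => exact good_one
  | prime p hp =>
    have : Fact p.Prime := ⟨hp⟩
    exact good_prime p
  | mul a b iha ihb =>
    have ha : 1 ≤ a := Nat.pos_of_ne_zero (by rintro rfl; simp at hm)
    have hb : 1 ≤ b := Nat.pos_of_ne_zero (by rintro rfl; simp at hm)
    exact good_mul ha hb (iha ha) (ihb hb)

theorem good_pow (a : ℕ) : Good (2 ^ a) (2 ^ a) := by
  induction a with
  | zero => exact good_one
  | succ a ih =>
    rw [pow_succ]
    exact good_mul Nat.one_le_two_pow (by norm_num) ih good_two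

theorem good_final (a r : ℕ) (hr : 1 ≤ r) (h : 2 ^ a ∣ r) : Good (2 ^ a) r := by
  obtain ⟨m, rfl⟩ := h
  have hm : 1 ≤ m := Nat.pos_of_ne_zero (by rintro rfl; simp at hr)
  have := good_mul Nat.one_le_two_pow hm (good_pow a) (good_all m hm)
  simpa using this

end KH

namespace KH

theorem lower (s r n k t t₀ : ℕ) (hr : 2 ≤ r) (hk : 1 ≤ k) (hnrk : r * k ≤ n) (hG : Good s r)
    (h0 : (r - 1) * (t₀ - 1) + r * (k - 1) + 1 ≤ n)
    (c : Finset (Fin n) → ℕ) (hc : IsKneserColoring n r t (stableSets n s k) c) : t₀ ≤ t := by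
  by_contra hlt
  have hb : (r - 1) * (max t 1) + r * (k - 1) + 1 ≤ n := by
    rcases Nat.eq_zero_or_pos t with rfl | ht
    · obtain ⟨k, rfl⟩ := Nat.exists_eq_add_of_le' hk
      rw [Nat.mul_succ] at hnrk
      simp
      omega
    · rw [max_eq_left ht]
      have : (r - 1) * t ≤ (r - 1) * (t₀ - 1) := Nat.mul_le_mul_left _ (by omega)
      omega
  obtain ⟨f, hf1, hf2, x, hx⟩ := hG n k (max t 1) hk (le_max_right _ _) hb c (by
    intro A hA
    have := hc.1 A hA
    rw [Finset.mem_Icc] at this ⊢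
    omega)
  have hinj : Function.Injective f := by
    intro i j hij
    by_contra hne
    have h1 := hf2 i j hne
    rw [hij, disjoint_self] at h1
    have h2 := (mem_stableSets.1 (hf1 j)).1
    rw [h1] at h2
    simp at h2
    omega
  apply hc.2 (univ.image f)
  · intro A hA
    obtain ⟨i, _, rfl⟩ := Finset.mem_image.1 hA
    exact hf1 i
  · rw [Finset.card_image_of_injective _ hinj]; simp
  · intro A hA B hB hAB
    simp only [Finset.coe_image, Set.mem_image] at hA hB
    obtain ⟨i, _, rfl⟩ := hA
    obtain ⟨j, _, rfl⟩ := hB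
    exact hf2 i j (fun h => hAB (by rw [h]))
  · refine ⟨x, ?_⟩
    intro A hA
    obtain ⟨i, _, rfl⟩ := Finset.mem_image.1 hA
    exact hx i

theorem upper (s r n k t₀ : ℕ) (hr : 2 ≤ r) (hk : 1 ≤ k) (ht : 1 ≤ t₀)
    (h0 : n + 1 ≤ (r - 1) * (t₀ - 1) + r * k) :
    ∃ c, IsKneserColoring n r t₀ (stableSets n s k) c := by
  let m : Finset (Fin n) → ℕ := fun A => sInf {i | ∃ x ∈ A, x.val = i}
  have hm1 : ∀ A ∈ stableSets n s k, ∃ x ∈ A, x.val = m A := by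
    intro A hA
    have hne : A.Nonempty := by
      rw [← Finset.card_pos, (mem_stableSets.1 hA).1]; exact hk
    obtain ⟨x, hx⟩ := hne
    exact Nat.sInf_mem (s := {i | ∃ x ∈ A, x.val = i}) ⟨x.val, x, hx, rfl⟩
  have hm2 : ∀ (A : Finset (Fin n)), ∀ x ∈ A, m A ≤ x.val := by
    intro A x hx
    exact Nat.sInf_le ⟨x, hx, rfl⟩
  refine ⟨fun A => min (m A / (r - 1) + 1) t₀, ?_, ?_⟩
  · intro A _
    rw [Finset.mem_Icc]
    change 1 ≤ min (m A / (r - 1) + 1) t₀ ∧ min (m A / (r - 1) + 1) t₀ ≤ t₀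
    exact ⟨le_min (Nat.le_add_left 1 _) ht, min_le_right _ _⟩
  · rintro E hE hcard hdis ⟨i, hi⟩
    by_cases hit : i < t₀
    · have hinj : Set.InjOn m (E : Set (Finset (Fin n))) := by
        intro A hA B hB hAB
        by_contra hne
        obtain ⟨x, hx, hxm⟩ := hm1 A (hE hA)
        obtain ⟨y, hy, hym⟩ := hm1 B (hE hB)
        have hxy : x = y := Fin.ext (by rw [hxm, hym, hAB])
        subst hxy
        exact Finset.disjoint_left.1 (hdis hA hB hne) hx hy
      have hsub : E.image m ⊆ Finset.Ico ((r - 1) * (i - 1)) ((r - 1) * (i - 1) + (r - 1)) := by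
        intro y hy
        obtain ⟨A, hA, rfl⟩ := Finset.mem_image.1 hy
        have h1 : min (m A / (r - 1) + 1) t₀ = i := hi A hA
        have h2 : m A / (r - 1) = i - 1 := by
          generalize m A / (r - 1) = D at h1 ⊢
          omega
        have h3 := Nat.div_add_mod (m A) (r - 1)
        have h4 := Nat.mod_lt (m A) (show r - 1 > 0 by omega)
        rw [h2] at h3
        rw [Finset.mem_Ico]
        omega
      have := Finset.card_le_card hsub
      rw [Finset.card_image_of_injOn hinj, hcard] at this
      simp at this
      omega
    · have hge : ∀ A ∈ E, (r - 1) * (t₀ - 1) ≤ m A := by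
        intro A hA
        have h1 : min (m A / (r - 1) + 1) t₀ = i := hi A hA
        have h2 : t₀ - 1 ≤ m A / (r - 1) := by
          generalize m A / (r - 1) = D at h1 ⊢
          omega
        rw [Nat.le_div_iff_mul_le (by omega)] at h2
        rwa [mul_comm]
      have hU : (E.biUnion (fun A => A)).card = r * k := by
        rw [Finset.card_biUnion (fun A hA B hB hAB => hdis hA hB hAB)]
        rw [Finset.sum_congr rfl (fun A hA => (mem_stableSets.1 (hE hA)).1)]
        simp [hcard]
      have hsub : (E.biUnion (fun A => A)).image Fin.val ⊆ Finset.Ico ((r - 1) * (t₀ - 1)) n := by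
        intro y hy
        obtain ⟨x, hx, rfl⟩ := Finset.mem_image.1 hy
        obtain ⟨A, hA, hxA⟩ := Finset.mem_biUnion.1 hx
        rw [Finset.mem_Ico]
        exact ⟨(hge A hA).trans (hm2 A x hxA), x.isLt⟩
      have := Finset.card_le_card hsub
      rw [Finset.card_image_of_injective _ Fin.val_injective, hU] at this
      simp only [Nat.card_Ico] at this
      have : 1 ≤ r * k := Nat.mul_pos (by omega) hk
      omega

end KH

theorem stmt15 (a k n r : ℕ) (ha : 1 ≤ a) (hk : 1 ≤ k) (hn : 1 ≤ n) (hr : 1 ≤ r)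
    (hnrk : r * k ≤ n) (hdvd : 2 ^ a ∣ r) :
    (kneserChrom n r (stableSets n (2 ^ a) k) : ℤ) =
      ⌈((n : ℚ) - (r : ℚ) * ((k : ℚ) - 1)) / ((r : ℚ) - 1)⌉ := by
  have hr2 : 2 ≤ r := by
    have h1 : 2 ^ 1 ≤ 2 ^ a := Nat.pow_le_pow_right (by norm_num) ha
    have h2 := Nat.le_of_dvd (by omega) hdvd
    omega
  obtain ⟨q, rfl⟩ : ∃ q, r = q + 2 := ⟨r - 2, by omega⟩
  obtain ⟨l, rfl⟩ : ∃ l, k = l + 1 := ⟨k - 1, by omega⟩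
  obtain ⟨b, hb⟩ : ∃ b, n = (q + 2) * l + 1 + b := by
    obtain ⟨b, rfl⟩ := Nat.exists_eq_add_of_le hnrk
    exact ⟨q + 1 + b, by ring⟩
  -- the value is `b / (q + 1) + 1`
  have h3 := Nat.div_add_mod b (q + 1)
  have h4 := Nat.mod_lt b (show q + 1 > 0 by omega)
  have hmain : kneserChrom n (q + 2) (stableSets n (2 ^ a) (l + 1)) = b / (q + 1) + 1 := by
    have hup : ∃ c, IsKneserColoring n (q + 2) (b / (q + 1) + 1) (stableSets n (2 ^ a) (l + 1)) c := by
      apply KH.upper _ _ _ _ _ hr2 hk (Nat.le_add_left 1 _)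
      have : (q + 2) * (l + 1) = (q + 2) * l + (q + 2) := by ring
      simp only [Nat.add_sub_cancel, show q + 2 - 1 = q + 1 by omega]
      generalize b / (q + 1) = D at *
      generalize b % (q + 1) = E at *
      omega
    apply le_antisymm
    · exact Nat.sInf_le hup
    · have hne : {t | ∃ c, IsKneserColoring n (q + 2) t (stableSets n (2 ^ a) (l + 1)) c}.Nonempty :=
        ⟨b / (q + 1) + 1, hup⟩
      apply le_csInf hne
      intro t ht
      obtain ⟨c, hc⟩ : ∃ c, IsKneserColoring n (q + 2) t (stableSets n (2 ^ a) (l + 1)) c := ht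
      refine KH.lower (2 ^ a) (q + 2) n (l + 1) t _ hr2 hk hnrk
        (KH.good_final a _ hr hdvd) ?_ c hc
      simp only [Nat.add_sub_cancel, show q + 2 - 1 = q + 1 by omega]
      generalize b / (q + 1) = D at *
      generalize b % (q + 1) = E at *
      omega
  rw [hmain]
  symm
  rw [Int.ceil_eq_iff]
  have hpos : (0 : ℚ) < ((q + 2 : ℕ) : ℚ) - 1 := by
    push_cast
    have : (0 : ℚ) ≤ q := Nat.cast_nonneg q
    linarith
  rw [lt_div_iff₀ hpos, div_le_iff₀ hpos]
  have h3' : ((q : ℚ) + 1) * ((b / (q + 1) : ℕ) : ℚ) + ((b % (q + 1) : ℕ) : ℚ) = b := by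
    exact_mod_cast h3
  have h4' : ((b % (q + 1) : ℕ) : ℚ) + 1 ≤ (q : ℚ) + 1 := by exact_mod_cast h4
  have h5' : (0 : ℚ) ≤ ((b % (q + 1) : ℕ) : ℚ) := Nat.cast_nonneg _
  have hb' : (n : ℚ) = (q + 2) * l + 1 + b := by exact_mod_cast hb
  rw [hb']
  generalize b / (q + 1) = D at *
  generalize b % (q + 1) = E at *
  push_cast
  constructor <;> nlinarith
end
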